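/- arXiv:2101.04419 — 9 statements merged into one kernel-verified Lean document; each statement's English description precedes it below -/
import Mathlib

section
/- For every invertible k×k matrix X with entries in A⁰ and every n ≥ 1, the transpose satisfies β^n_{Xᵀ} = (−1)^{n(n−1)/2} · β^n_X. -/
/-!
For matrices `P`, `Q` whose entries are homogeneous of degrees `p`, `q`, graded commutativity gives
`(P * Q)ᵀ = (-1) ^ (p * q) • (Qᵀ * Pᵀ)` and `trace (P * Q) = (-1) ^ (p * q) • trace (Q * P)`.
Put `N = dX * Y`, a matrix of degree one. As `Y` has degree zero, `Yᵀ * dXᵀ = Nᵀ`, with no sign.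
Reversing a product of `n` factors of degree one costs one sign for each of the `n (n - 1) / 2` pairs
of factors, so `(Nᵀ) ^ n = (-1) ^ (n (n - 1) / 2) • (N ^ n)ᵀ`. Finally `N ^ n` and `(Y * dX) ^ n`
differ by a cyclic rotation of the degree zero factor `Y`, so they have the same trace. -/

open Matrix

section Graded

variable {A : Type*} [Ring A] [Algebra ℚ A] {𝒜 : ℕ → Submodule ℚ A} {k : ℕ}

lemma entry_mul_mem
    (hgmul : ∀ (m n : ℕ), ∀ a ∈ 𝒜 m, ∀ b ∈ 𝒜 n, a * b ∈ 𝒜 (m + n))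
    {p q : ℕ} {P Q : Matrix (Fin k) (Fin k) A}
    (hP : ∀ i j, P i j ∈ 𝒜 p) (hQ : ∀ i j, Q i j ∈ 𝒜 q) (i j : Fin k) :
    (P * Q) i j ∈ 𝒜 (p + q) := by
  rw [Matrix.mul_apply]
  exact Submodule.sum_mem _ fun l _ => hgmul p q _ (hP i l) _ (hQ l j)

lemma entry_pow_mem (hone : (1 : A) ∈ 𝒜 0)
    (hgmul : ∀ (m n : ℕ), ∀ a ∈ 𝒜 m, ∀ b ∈ 𝒜 n, a * b ∈ 𝒜 (m + n))
    {N : Matrix (Fin k) (Fin k) A} (hN : ∀ i j, N i j ∈ 𝒜 1) (n : ℕ) :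
    ∀ i j, (N ^ n) i j ∈ 𝒜 n := by
  induction n with
  | zero =>
    intro i j
    rw [pow_zero, Matrix.one_apply]
    split_ifs
    · exact hone
    · exact Submodule.zero_mem _
  | succ n ih =>
    rw [pow_succ]
    exact entry_mul_mem hgmul ih hN

lemma transpose_mul_graded
    (hcomm : ∀ (m n : ℕ), ∀ a ∈ 𝒜 m, ∀ b ∈ 𝒜 n,
      a * b = ((-1 : ℚ) ^ (m * n)) • (b * a))
    {p q : ℕ} {P Q : Matrix (Fin k) (Fin k) A}
    (hP : ∀ i j, P i j ∈ 𝒜 p) (hQ : ∀ i j, Q i j ∈ 𝒜 q) :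
    (P * Q)ᵀ = ((-1 : ℚ) ^ (p * q)) • (Qᵀ * Pᵀ) := by
  ext i j
  simp only [Matrix.transpose_apply, Matrix.smul_apply, Matrix.mul_apply, Finset.smul_sum]
  exact Finset.sum_congr rfl fun l _ => hcomm p q _ (hP j l) _ (hQ l i)

lemma trace_mul_comm_graded
    (hcomm : ∀ (m n : ℕ), ∀ a ∈ 𝒜 m, ∀ b ∈ 𝒜 n,
      a * b = ((-1 : ℚ) ^ (m * n)) • (b * a))
    {p q : ℕ} {P Q : Matrix (Fin k) (Fin k) A}
    (hP : ∀ i j, P i j ∈ 𝒜 p) (hQ : ∀ i j, Q i j ∈ 𝒜 q) :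
    Matrix.trace (P * Q) = ((-1 : ℚ) ^ (p * q)) • Matrix.trace (Q * P) := by
  simp only [Matrix.trace, Matrix.diag_apply, Matrix.mul_apply, Finset.smul_sum]
  rw [Finset.sum_comm]
  exact Finset.sum_congr rfl fun j _ => Finset.sum_congr rfl fun i _ =>
    hcomm p q _ (hP i j) _ (hQ j i)

lemma transpose_pow_graded (hone : (1 : A) ∈ 𝒜 0)
    (hgmul : ∀ (m n : ℕ), ∀ a ∈ 𝒜 m, ∀ b ∈ 𝒜 n, a * b ∈ 𝒜 (m + n))
    (hcomm : ∀ (m n : ℕ), ∀ a ∈ 𝒜 m, ∀ b ∈ 𝒜 n,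
      a * b = ((-1 : ℚ) ^ (m * n)) • (b * a))
    {N : Matrix (Fin k) (Fin k) A} (hN : ∀ i j, N i j ∈ 𝒜 1) (n : ℕ) :
    Nᵀ ^ n = ((-1 : ℚ) ^ (n * (n - 1) / 2)) • (N ^ n)ᵀ := by
  induction n with
  | zero => simp
  | succ n ih =>
    have hsign : (n + 1) * (n + 1 - 1) / 2 = n * (n - 1) / 2 + n := by
      rw [← Finset.sum_range_id_mul_two, ← Finset.sum_range_id_mul_two,
        Nat.mul_div_cancel _ two_pos, Nat.mul_div_cancel _ two_pos, Finset.sum_range_succ]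
    rw [pow_succ N, transpose_mul_graded hcomm (entry_pow_mem hone hgmul hN n) hN, pow_succ', ih,
      hsign, Matrix.mul_smul, smul_smul, mul_one, pow_add, mul_assoc, ← mul_pow]
    simp

end Graded

theorem beta_transpose
    {A : Type*} [Ring A] [Algebra ℚ A]
    (𝒜 : ℕ → Submodule ℚ A)
    (hdecomp : DirectSum.IsInternal 𝒜)
    (hone : (1 : A) ∈ 𝒜 0)
    (hgmul : ∀ (m n : ℕ), ∀ a ∈ 𝒜 m, ∀ b ∈ 𝒜 n, a * b ∈ 𝒜 (m + n))
    (hcomm : ∀ (m n : ℕ), ∀ a ∈ 𝒜 m, ∀ b ∈ 𝒜 n,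
      a * b = ((-1 : ℚ) ^ (m * n)) • (b * a))
    (d : A →ₗ[ℚ] A)
    (hd2 : ∀ a : A, d (d a) = 0)
    (hddeg : ∀ (n : ℕ), ∀ a ∈ 𝒜 n, d a ∈ 𝒜 (n + 1))
    (hleib : ∀ (m : ℕ), ∀ a ∈ 𝒜 m, ∀ b : A,
      d (a * b) = d a * b + ((-1 : ℚ) ^ m) • (a * d b))
    {k : ℕ} (X Y : Matrix (Fin k) (Fin k) A)
    (hX0 : ∀ i j, X i j ∈ 𝒜 0) (hY0 : ∀ i j, Y i j ∈ 𝒜 0)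
    (hXY : X * Y = 1) (hYX : Y * X = 1) :
    ∀ n : ℕ, 1 ≤ n →
      Matrix.trace ((Yᵀ * (Xᵀ.map (fun a => d a))) ^ n) =
        (-1 : A) ^ (n * (n - 1) / 2) * Matrix.trace ((Y * X.map (fun a => d a)) ^ n) := by
  intro n hn
  obtain ⟨m, rfl⟩ : ∃ m, n = m + 1 := ⟨n - 1, by omega⟩
  set D : Matrix (Fin k) (Fin k) A := X.map (fun a => d a) with hD
  have hD1 : ∀ i j, D i j ∈ 𝒜 1 := fun i j => hddeg 0 _ (hX0 i j)
  have hN : ∀ i j, (D * Y) i j ∈ 𝒜 1 := entry_mul_mem hgmul hD1 hY0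
  have hM : ∀ i j, (Y * D) i j ∈ 𝒜 1 := fun i j => by
    simpa using entry_mul_mem hgmul hY0 hD1 i j
  have hT : Yᵀ * Xᵀ.map (fun a => d a) = (D * Y)ᵀ := by
    rw [transpose_mul_graded hcomm hD1 hY0, mul_zero, pow_zero, one_smul, hD,
      Matrix.transpose_map]
  have hcyc : Matrix.trace ((D * Y) ^ (m + 1)) = Matrix.trace ((Y * D) ^ (m + 1)) := by
    have hP := entry_mul_mem hgmul hD1 (entry_pow_mem hone hgmul hM m)
    rw [pow_succ, ← mul_assoc, mul_pow_mul, trace_mul_comm_graded hcomm hP hY0, mul_zero,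
      pow_zero, one_smul, ← mul_assoc, ← pow_succ']
  rw [hT, transpose_pow_graded hone hgmul hcomm hN, Matrix.trace_smul, Matrix.trace_transpose,
    hcyc, Algebra.smul_def]
  simp
end

section
/- For every invertible k×k matrix X with entries in A⁰ and every n ≥ 0, the odd invariant trace is closed: d(β^{2n+1}_X) = 0. -/
/-!
Write `μ = Y * dX`, with `d` applied entrywise. Differentiating `Y * X = 1` gives `dY = -μ * Y`,
hence the Maurer–Cartan equation `dμ = -μ ^ 2`. By the graded Leibniz rule the two contributions
to `d (μ ^ 2)` cancel, so `d (μ ^ (2n)) = 0` and `d (μ ^ (2n+1)) = -μ ^ (2n+2)`.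
The trace of two matrices of odd degree anticommutes, so `tr (μ * μ ^ (2n+1))` equals its own
negative and vanishes, as `2` is invertible in a `ℚ`-algebra.
-/

open Matrix

theorem map_d_mul {A : Type*} [Ring A] [Algebra ℚ A] (𝒜 : ℕ → Submodule ℚ A)
    (d : A →ₗ[ℚ] A)
    (hleib : ∀ (m : ℕ), ∀ a ∈ 𝒜 m, ∀ b : A,
      d (a * b) = d a * b + ((-1 : ℚ) ^ m) • (a * d b))
    {k : ℕ} (m : ℕ) (M N : Matrix (Fin k) (Fin k) A) (hM : ∀ i j, M i j ∈ 𝒜 m) :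
    (M * N).map d = M.map d * N + ((-1 : ℚ) ^ m) • (M * N.map d) := by
  ext i j
  simp only [Matrix.map_apply, Matrix.mul_apply, Matrix.add_apply, Matrix.smul_apply, map_sum,
    Finset.smul_sum, ← Finset.sum_add_distrib]
  exact Finset.sum_congr rfl fun l _ => hleib m _ (hM i l) _

theorem mul_mem_graded {A : Type*} [Ring A] [Algebra ℚ A] (𝒜 : ℕ → Submodule ℚ A)
    (hgmul : ∀ (m n : ℕ), ∀ a ∈ 𝒜 m, ∀ b ∈ 𝒜 n, a * b ∈ 𝒜 (m + n))
    {k : ℕ} (m n : ℕ) (M N : Matrix (Fin k) (Fin k) A)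
    (hM : ∀ i j, M i j ∈ 𝒜 m) (hN : ∀ i j, N i j ∈ 𝒜 n) (i j : Fin k) :
    (M * N) i j ∈ 𝒜 (m + n) := by
  rw [Matrix.mul_apply]
  exact Submodule.sum_mem _ fun l _ => hgmul m n _ (hM i l) _ (hN l j)

/-- The trace is cyclic up to the Koszul sign. -/
theorem trace_mul_graded_comm {A : Type*} [Ring A] [Algebra ℚ A] (𝒜 : ℕ → Submodule ℚ A)
    (hcomm : ∀ (m n : ℕ), ∀ a ∈ 𝒜 m, ∀ b ∈ 𝒜 n,
      a * b = ((-1 : ℚ) ^ (m * n)) • (b * a))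
    {k : ℕ} (m n : ℕ) (M N : Matrix (Fin k) (Fin k) A)
    (hM : ∀ i j, M i j ∈ 𝒜 m) (hN : ∀ i j, N i j ∈ 𝒜 n) :
    (M * N).trace = ((-1 : ℚ) ^ (m * n)) • (N * M).trace := by
  simp only [Matrix.trace, Matrix.diag_apply, Matrix.mul_apply, Finset.smul_sum]
  rw [Finset.sum_comm]
  exact Finset.sum_congr rfl fun i _ => Finset.sum_congr rfl fun j _ =>
    hcomm m n _ (hM j i) _ (hN i j)

theorem beta_odd_closed
    {A : Type*} [Ring A] [Algebra ℚ A]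
    (𝒜 : ℕ → Submodule ℚ A)
    (hdecomp : DirectSum.IsInternal 𝒜)
    (hone : (1 : A) ∈ 𝒜 0)
    (hgmul : ∀ (m n : ℕ), ∀ a ∈ 𝒜 m, ∀ b ∈ 𝒜 n, a * b ∈ 𝒜 (m + n))
    (hcomm : ∀ (m n : ℕ), ∀ a ∈ 𝒜 m, ∀ b ∈ 𝒜 n,
      a * b = ((-1 : ℚ) ^ (m * n)) • (b * a))
    (d : A →ₗ[ℚ] A)
    (hd2 : ∀ a : A, d (d a) = 0)
    (hddeg : ∀ (n : ℕ), ∀ a ∈ 𝒜 n, d a ∈ 𝒜 (n + 1))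
    (hleib : ∀ (m : ℕ), ∀ a ∈ 𝒜 m, ∀ b : A,
      d (a * b) = d a * b + ((-1 : ℚ) ^ m) • (a * d b))
    {k : ℕ} (X Y : Matrix (Fin k) (Fin k) A)
    (hX0 : ∀ i j, X i j ∈ 𝒜 0) (hY0 : ∀ i j, Y i j ∈ 𝒜 0)
    (hXY : X * Y = 1) (hYX : Y * X = 1) :
    ∀ n : ℕ, d (Matrix.trace ((Y * X.map (fun a => d a)) ^ (2 * n + 1))) = 0 := by
  intro n
  change d (Matrix.trace ((Y * X.map d) ^ (2 * n + 1))) = 0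
  have hd1 : d 1 = 0 := by simpa using hleib 0 1 hone 1
  have hdone : (1 : Matrix (Fin k) (Fin k) A).map d = 0 := by
    ext i j
    by_cases h : i = j <;> simp [Matrix.one_apply, h, hd1]
  have hddX : (X.map d).map d = 0 := by
    ext i j
    simp [hd2]
  obtain ⟨μ, hμ⟩ : ∃ μ, μ = Y * X.map d := ⟨_, rfl⟩
  have hμ1 : ∀ i j, μ i j ∈ 𝒜 1 := by
    rw [hμ]
    exact mul_mem_graded 𝒜 hgmul 0 1 Y _ hY0 fun i j => hddeg 0 _ (hX0 i j)
  have hdY : Y.map d = -(μ * Y) := by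
    have h := map_d_mul 𝒜 d hleib 0 Y X hY0
    rw [hYX, hdone, pow_zero, one_smul, ← hμ] at h
    have h2 : Y.map d * X = -μ := eq_neg_of_add_eq_zero_left h.symm
    calc Y.map d = Y.map d * X * Y := by rw [mul_assoc, hXY, mul_one]
      _ = -(μ * Y) := by rw [h2, neg_mul]
  have hdμ : μ.map d = -(μ * μ) := by
    have h := map_d_mul 𝒜 d hleib 0 Y (X.map d) hY0
    rw [hddX, mul_zero, smul_zero, add_zero, hdY, neg_mul, mul_assoc, ← hμ] at h
    exact h
  have hodd : ∀ N : Matrix (Fin k) (Fin k) A,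
      (μ * N).map d = -(μ * μ * N) - μ * N.map d := by
    intro N
    rw [map_d_mul 𝒜 d hleib 1 μ N hμ1, hdμ]
    simp [sub_eq_add_neg]
  have heven : ∀ m : ℕ, (μ ^ (2 * m)).map d = 0 := by
    intro m
    induction m with
    | zero => simpa using hdone
    | succ m ih =>
      rw [show 2 * (m + 1) = 2 * m + 1 + 1 by ring, pow_succ', pow_succ', hodd, hodd, ih]
      noncomm_ring
  have hpow : ∀ m : ℕ, ∀ i j, (μ ^ (m + 1)) i j ∈ 𝒜 (m + 1) := by
    intro m
    induction m with
    | zero => simpa using hμ1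
    | succ m ih =>
      rw [pow_succ]
      exact mul_mem_graded 𝒜 hgmul (m + 1) 1 _ _ ih hμ1
  have htr : (μ * μ ^ (2 * n + 1)).trace = 0 := by
    have h := trace_mul_graded_comm 𝒜 hcomm 1 (2 * n + 1) μ _ hμ1 (hpow (2 * n))
    rw [← pow_succ, ← pow_succ', Odd.neg_one_pow ⟨n, by ring⟩, neg_one_smul] at h
    rw [← pow_succ']
    have h2 : (2 : ℚ) • (μ ^ (2 * n + 1 + 1)).trace = 0 := by
      rw [two_smul]
      exact add_eq_zero_iff_eq_neg.mpr h
    exact (smul_eq_zero.mp h2).resolve_left two_ne_zero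
  have hdtr : d (μ ^ (2 * n + 1)).trace = ((μ ^ (2 * n + 1)).map d).trace := by
    simp [Matrix.trace]
  rw [← hμ, hdtr, pow_succ', hodd, heven, mul_zero, sub_zero, mul_assoc, ← pow_succ',
    Matrix.trace_neg, htr, neg_zero]
end

section
/- Projective invariance: let X be an invertible k×k matrix over A⁰ and λ ∈ A⁰ an invertible element. Then β^{2n+1}_{λX} = β^{2n+1}_X for all n ≥ 1, whereas for n = 0 one has β^1_{λX} = β^1_X + k·λ⁻¹·dλ. -/
/-!
Write `M = X⁻¹ dX` (`X⁻¹` is `Y` below) and `ω = lam⁻¹ d lam`. The Leibniz rule gives `μ_{lam X} = M + ω · 1`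
(`mu_smul`). Entries of `M` and `ω` have degree one, so `ω · 1` anticommutes with `M` and, as `2` is
invertible, `ω ^ 2 = 0`. Hence `(M + ω · 1) ^ 2 = M ^ 2`, and
`(M + ω · 1) ^ (2 n + 1) = M ^ (2 n + 1) + M ^ (2 n) (ω · 1)`. The trace of the last term is
`trace (M ^ (2 n)) * ω`. For `n ≥ 1` it vanishes: by graded cyclicity of the trace
(`trace_mul_of_odd`), `trace (M * M ^ (2 n - 1)) = - trace (M ^ (2 n - 1) * M)`. For `n = 0` it is
`k ω`.
-/

open Matrix

section GradedMatrix

variable {A : Type*} [Ring A] [Algebra ℚ A] {𝒜 : ℕ → Submodule ℚ A} {k : ℕ}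

theorem eq_zero_of_eq_neg {a : A} (h : a = -a) : a = 0 := by
  have h2 : (2 : ℚ) • a = 0 := by
    rw [two_smul]
    nth_rewrite 1 [h]
    exact neg_add_cancel a
  exact (smul_eq_zero_iff_right (two_ne_zero)).1 h2

theorem odd_anticomm
    (hcomm : ∀ (m n : ℕ), ∀ a ∈ 𝒜 m, ∀ b ∈ 𝒜 n, a * b = ((-1 : ℚ) ^ (m * n)) • (b * a))
    {m n : ℕ} (hm : Odd m) (hn : Odd n) {a b : A} (ha : a ∈ 𝒜 m) (hb : b ∈ 𝒜 n) :
    a * b = -(b * a) := by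
  rw [hcomm m n a ha b hb, (hm.mul hn).neg_one_pow, neg_one_smul]

theorem degree_zero_comm
    (hcomm : ∀ (m n : ℕ), ∀ a ∈ 𝒜 m, ∀ b ∈ 𝒜 n, a * b = ((-1 : ℚ) ^ (m * n)) • (b * a))
    {n : ℕ} {a b : A} (ha : a ∈ 𝒜 0) (hb : b ∈ 𝒜 n) : a * b = b * a := by
  rw [hcomm 0 n a ha b hb, zero_mul, pow_zero, one_smul]

theorem matrix_mul_mem
    (hgmul : ∀ (m n : ℕ), ∀ a ∈ 𝒜 m, ∀ b ∈ 𝒜 n, a * b ∈ 𝒜 (m + n))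
    {m n : ℕ} {M N : Matrix (Fin k) (Fin k) A}
    (hM : ∀ i j, M i j ∈ 𝒜 m) (hN : ∀ i j, N i j ∈ 𝒜 n) (i j : Fin k) :
    (M * N) i j ∈ 𝒜 (m + n) := by
  rw [Matrix.mul_apply]
  exact Submodule.sum_mem _ fun l _ => hgmul m n _ (hM i l) _ (hN l j)

theorem matrix_pow_mem (hone : (1 : A) ∈ 𝒜 0)
    (hgmul : ∀ (m n : ℕ), ∀ a ∈ 𝒜 m, ∀ b ∈ 𝒜 n, a * b ∈ 𝒜 (m + n))
    {M : Matrix (Fin k) (Fin k) A} (hM : ∀ i j, M i j ∈ 𝒜 1) (n : ℕ) :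
    ∀ i j, (M ^ n) i j ∈ 𝒜 n := by
  induction n with
  | zero =>
    intro i j
    rw [pow_zero, Matrix.one_apply]
    split_ifs
    exacts [hone, Submodule.zero_mem _]
  | succ n ih =>
    intro i j
    rw [pow_succ]
    exact matrix_mul_mem hgmul ih hM i j

/-- Graded cyclicity of the trace, for two matrices of odd degree. -/
theorem trace_mul_of_odd
    (hcomm : ∀ (m n : ℕ), ∀ a ∈ 𝒜 m, ∀ b ∈ 𝒜 n, a * b = ((-1 : ℚ) ^ (m * n)) • (b * a))
    {m n : ℕ} (hm : Odd m) (hn : Odd n) {M N : Matrix (Fin k) (Fin k) A}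
    (hM : ∀ i j, M i j ∈ 𝒜 m) (hN : ∀ i j, N i j ∈ 𝒜 n) :
    Matrix.trace (M * N) = -Matrix.trace (N * M) := by
  simp only [Matrix.trace, Matrix.diag_apply, Matrix.mul_apply]
  rw [Finset.sum_comm, ← Finset.sum_neg_distrib]
  refine Finset.sum_congr rfl fun i _ => ?_
  rw [← Finset.sum_neg_distrib]
  exact Finset.sum_congr rfl fun j _ => odd_anticomm hcomm hm hn (hM j i) (hN i j)

theorem trace_even_pow_eq_zero (hone : (1 : A) ∈ 𝒜 0)
    (hgmul : ∀ (m n : ℕ), ∀ a ∈ 𝒜 m, ∀ b ∈ 𝒜 n, a * b ∈ 𝒜 (m + n))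
    (hcomm : ∀ (m n : ℕ), ∀ a ∈ 𝒜 m, ∀ b ∈ 𝒜 n, a * b = ((-1 : ℚ) ^ (m * n)) • (b * a))
    {M : Matrix (Fin k) (Fin k) A} (hM : ∀ i j, M i j ∈ 𝒜 1) {n : ℕ} (hn : 1 ≤ n) :
    Matrix.trace (M ^ (2 * n)) = 0 := by
  obtain ⟨r, rfl⟩ : ∃ r, n = r + 1 := ⟨n - 1, by omega⟩
  have h := trace_mul_of_odd hcomm odd_one (odd_two_mul_add_one r) hM
    (matrix_pow_mem hone hgmul hM (2 * r + 1))
  rw [← pow_succ', ← pow_succ] at h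
  exact eq_zero_of_eq_neg h

/-- Adding the degree-one scalar matrix `ω · 1` to a degree-one matrix `M` does not change its
square. -/
theorem add_scalar_sq
    (hcomm : ∀ (m n : ℕ), ∀ a ∈ 𝒜 m, ∀ b ∈ 𝒜 n, a * b = ((-1 : ℚ) ^ (m * n)) • (b * a))
    {M : Matrix (Fin k) (Fin k) A} (hM : ∀ i j, M i j ∈ 𝒜 1) {ω : A} (hω : ω ∈ 𝒜 1) :
    (M + Matrix.diagonal fun _ => ω) ^ 2 = M ^ 2 := by
  have hW : (Matrix.diagonal fun _ : Fin k => ω) * (Matrix.diagonal fun _ => ω) = 0 := by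
    rw [Matrix.diagonal_mul_diagonal,
      eq_zero_of_eq_neg (odd_anticomm hcomm odd_one odd_one hω hω), Matrix.diagonal_zero]
  have hMW : M * (Matrix.diagonal fun _ => ω) = -((Matrix.diagonal fun _ => ω) * M) := by
    ext i j
    rw [Matrix.neg_apply, Matrix.mul_diagonal, Matrix.diagonal_mul]
    exact odd_anticomm hcomm odd_one odd_one (hM i j) hω
  rw [sq, sq, add_mul, mul_add, mul_add, hW, hMW]
  abel

/-- `μ_{lam X} = μ_X + (lam⁻¹ d lam) · 1`. -/
theorem mu_smul
    (hcomm : ∀ (m n : ℕ), ∀ a ∈ 𝒜 m, ∀ b ∈ 𝒜 n, a * b = ((-1 : ℚ) ^ (m * n)) • (b * a))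
    (d : A →ₗ[ℚ] A)
    (hddeg : ∀ (n : ℕ), ∀ a ∈ 𝒜 n, d a ∈ 𝒜 (n + 1))
    (hleib : ∀ (m : ℕ), ∀ a ∈ 𝒜 m, ∀ b : A,
      d (a * b) = d a * b + ((-1 : ℚ) ^ m) • (a * d b))
    {X Y : Matrix (Fin k) (Fin k) A} (hY0 : ∀ i j, Y i j ∈ 𝒜 0) (hYX : Y * X = 1)
    {lam lamInv : A} (hlam0 : lam ∈ 𝒜 0) (hlam' : lamInv * lam = 1) :
    (Matrix.of fun i j => lamInv * Y i j) * (Matrix.of fun i j => lam * X i j).map (fun a => d a) =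
      Y * X.map (fun a => d a) + Matrix.diagonal fun _ => lamInv * d lam := by
  have hD : (Matrix.diagonal fun _ : Fin k => lamInv * d lam) =
      (Matrix.diagonal fun _ => lamInv * d lam) * (Y * X) := by rw [hYX, mul_one]
  rw [hD]
  ext i j
  rw [Matrix.add_apply, Matrix.diagonal_mul]
  simp only [Matrix.mul_apply, Matrix.map_apply, Matrix.of_apply]
  rw [Finset.mul_sum, ← Finset.sum_add_distrib]
  refine Finset.sum_congr rfl fun l _ => ?_
  rw [hleib 0 lam hlam0, pow_zero, one_smul, mul_add, add_comm]
  congr 1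
  · calc lamInv * Y i l * (lam * d (X l j)) = lamInv * (Y i l * lam) * d (X l j) := by
          simp only [mul_assoc]
      _ = lamInv * lam * Y i l * d (X l j) := by
          rw [degree_zero_comm hcomm (hY0 i l) hlam0]; simp only [mul_assoc]
      _ = Y i l * d (X l j) := by rw [hlam', one_mul]
  · calc lamInv * Y i l * (d lam * X l j) = lamInv * (Y i l * d lam) * X l j := by
          simp only [mul_assoc]
      _ = lamInv * d lam * (Y i l * X l j) := by
          rw [degree_zero_comm hcomm (hY0 i l) (hddeg 0 lam hlam0)]; simp only [mul_assoc]

end GradedMatrix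

theorem beta_projective_invariance
    {A : Type*} [Ring A] [Algebra ℚ A]
    (𝒜 : ℕ → Submodule ℚ A)
    (hdecomp : DirectSum.IsInternal 𝒜)
    (hone : (1 : A) ∈ 𝒜 0)
    (hgmul : ∀ (m n : ℕ), ∀ a ∈ 𝒜 m, ∀ b ∈ 𝒜 n, a * b ∈ 𝒜 (m + n))
    (hcomm : ∀ (m n : ℕ), ∀ a ∈ 𝒜 m, ∀ b ∈ 𝒜 n,
      a * b = ((-1 : ℚ) ^ (m * n)) • (b * a))
    (d : A →ₗ[ℚ] A)
    (hd2 : ∀ a : A, d (d a) = 0)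
    (hddeg : ∀ (n : ℕ), ∀ a ∈ 𝒜 n, d a ∈ 𝒜 (n + 1))
    (hleib : ∀ (m : ℕ), ∀ a ∈ 𝒜 m, ∀ b : A,
      d (a * b) = d a * b + ((-1 : ℚ) ^ m) • (a * d b))
    {k : ℕ} (X Y : Matrix (Fin k) (Fin k) A)
    (hX0 : ∀ i j, X i j ∈ 𝒜 0) (hY0 : ∀ i j, Y i j ∈ 𝒜 0)
    (hXY : X * Y = 1) (hYX : Y * X = 1)
    (lam lamInv : A)
    (hlam0 : lam ∈ 𝒜 0) (hlamInv0 : lamInv ∈ 𝒜 0)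
    (hlam : lam * lamInv = 1) (hlam' : lamInv * lam = 1) :
    (∀ n : ℕ, 1 ≤ n →
      Matrix.trace (((Matrix.of fun i j => lamInv * Y i j) * (Matrix.of fun i j => lam * X i j).map (fun a => d a)) ^ (2 * n + 1)) =
        Matrix.trace ((Y * X.map (fun a => d a)) ^ (2 * n + 1))) ∧
    Matrix.trace ((Matrix.of fun i j => lamInv * Y i j) * (Matrix.of fun i j => lam * X i j).map (fun a => d a)) =
      Matrix.trace (Y * X.map (fun a => d a)) + (k : A) * (lamInv * d lam) := by
  have hM : ∀ i j, (Y * X.map (fun a => d a)) i j ∈ 𝒜 1 :=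
    matrix_mul_mem hgmul hY0 fun i j => hddeg 0 _ (hX0 i j)
  have hω : lamInv * d lam ∈ 𝒜 1 := hgmul 0 1 _ hlamInv0 _ (hddeg 0 _ hlam0)
  rw [mu_smul hcomm d hddeg hleib hY0 hYX hlam0 hlam']
  refine ⟨fun n hn => ?_, ?_⟩
  · have htr : Matrix.trace ((Y * X.map (fun a => d a)) ^ (2 * n) *
        Matrix.diagonal fun _ => lamInv * d lam) = 0 := by
      have h := trace_even_pow_eq_zero hone hgmul hcomm hM hn
      simp only [Matrix.trace, Matrix.diag_apply, Matrix.mul_diagonal] at h ⊢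
      rw [← Finset.sum_mul, h, zero_mul]
    rw [pow_succ, pow_mul, add_scalar_sq hcomm hM hω, ← pow_mul, mul_add, Matrix.trace_add, htr,
      add_zero, ← pow_succ]
  · rw [Matrix.trace_add, Matrix.trace_diagonal, Finset.sum_const, Finset.card_univ,
      Fintype.card_fin, nsmul_eq_mul]
end

section
/- Stable vanishing: if X is an invertible k×k matrix over A⁰, then β^m_X = 0 for all m ≥ 2k. -/
/-!
The matrix `μ = Y * dX` has entries of degree one, so `μ ^ 2` has entries of degree two, which are
central in `A`. Hence `μ ^ 2` is a `k × k` matrix over a commutative `ℚ`-algebra. Graded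
commutativity makes the trace of a product of two odd-degree matrices antisymmetric
(`trace_mul_graded`), so `tr (μ ^ (2 * j)) = - tr (μ ^ (2 * j)) = 0` for every `j ≥ 1`: all power
traces of `μ ^ 2` vanish. In characteristic zero this forces `(μ ^ 2) ^ k = 0`
(`pow_eq_zero_of_trace_pow`), so that `μ ^ m` itself vanishes for `m ≥ 2 * k`. This is Rosset's
argument for the Amitsur–Levitzki theorem.

Nilpotency with the sharp exponent holds over an arbitrary commutative `ℚ`-algebra, where
eigenvalues are not available. It follows from Jacobi's formula `p' = tr (adj (X - M))` for the
characteristic polynomial `p`: the vanishing of the power traces turns it into `X p' = k p`, which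
leaves only `p = X ^ k`, and Cayley–Hamilton applies.
-/

open Matrix Polynomial

/-- Jacobi's formula for the characteristic polynomial. -/
lemma derivative_charpoly_eq_trace_adjugate {R : Type*} [CommRing R] {n : Type*} [Fintype n]
    [DecidableEq n] (M : Matrix n n R) :
    derivative M.charpoly = trace (adjugate (charmatrix M)) := by
  have hadj : ∀ i, adjugate (charmatrix M) i i =
      det ((charmatrix M).updateCol i (Pi.single i 1)) := by
    intro i
    rw [← transpose_apply (adjugate _) i i, adjugate_transpose, adjugate_apply,
      updateRow_transpose, det_transpose]
  have hder : ∀ i j, derivative (charmatrix M i j) = (Pi.single j 1 : n → R[X]) i := by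
    intro i j
    by_cases h : i = j
    · subst h; simp
    · simp [h]
  simp only [trace, diag_apply, hadj, charpoly, det_apply, derivative_sum]
  rw [Finset.sum_comm]
  refine Finset.sum_congr rfl fun σ _ => ?_
  rw [← Finset.smul_sum, Units.smul_def, Units.smul_def, derivative_smul, derivative_prod_finset]
  congr 1
  refine Finset.sum_congr rfl fun i _ => ?_
  rw [← Finset.prod_erase_mul _ _ (Finset.mem_univ i), hder]
  congr 1
  · refine Finset.prod_congr rfl fun j hj => ?_
    rw [updateCol_ne (Finset.ne_of_mem_erase hj)]
  · simp

/-- The traces `T j = tr (adj (X - M) * M ^ j)` satisfy `T (j + 1) = X * T j` for `j ≥ 1`, whereas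
their degrees are bounded independently of `j`; so they vanish. -/
lemma trace_adjugate_charmatrix_mul {R : Type*} [CommRing R] {n : Type*} [Fintype n]
    [DecidableEq n] (M : Matrix n n R) (h : ∀ j, 1 ≤ j → trace (M ^ j) = 0) :
    trace (adjugate (charmatrix M) * M.map C) = 0 := by
  set N := adjugate (charmatrix M) with hN
  have hX : ∀ Q : Matrix n n R[X],
      X * trace (N * Q) = trace (N * (M.map C * Q)) + M.charpoly * trace Q := by
    intro Q
    have h1 : N * charmatrix M = M.charpoly • 1 := adjugate_mul _
    have h2 : N * (charmatrix M * Q) = M.charpoly • Q := by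
      rw [← mul_assoc, h1, smul_mul_assoc, one_mul]
    have h3 : charmatrix M * Q = (X : R[X]) • Q - M.map C * Q := by
      rw [charmatrix, sub_mul, scalar_apply, ← smul_one_eq_diagonal, smul_mul_assoc, one_mul]
      rfl
    rw [h3, mul_sub, mul_smul_comm] at h2
    have h4 := congrArg trace h2
    rw [trace_sub, trace_smul, trace_smul, smul_eq_mul, smul_eq_mul] at h4
    rw [← h4]; ring
  have hpow : ∀ j, (M ^ j).map (C : R →+* R[X]) = (M.map C) ^ j := fun j =>
    map_pow (C : R →+* R[X]).mapMatrix M j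
  have hT : ∀ j, trace (N * (M ^ (j + 1)).map C) = X ^ j * trace (N * M.map C) := by
    intro j
    induction j with
    | zero => simp
    | succ j ih =>
      have ht : trace ((M ^ (j + 1)).map (C : R →+* R[X])) = 0 := by
        rw [← AddMonoidHom.map_trace, h _ (by omega), map_zero]
      have := hX ((M ^ (j + 1)).map C)
      rw [ht, mul_zero, add_zero, ih, hpow, ← pow_succ', ← hpow] at this
      rw [← this, pow_succ']; ring
  obtain ⟨D, hD⟩ : ∃ D, ∀ a b, (N a b).natDegree < D := by
    refine ⟨(∑ a, ∑ b, (N a b).natDegree) + 1, fun a b => Nat.lt_succ_of_le ?_⟩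
    exact (Finset.single_le_sum (f := fun b => (N a b).natDegree) (fun _ _ => Nat.zero_le _)
      (Finset.mem_univ b)).trans
      (Finset.single_le_sum (f := fun a => ∑ b, (N a b).natDegree) (fun _ _ => Nat.zero_le _)
        (Finset.mem_univ a))
  ext i
  have hc := congrArg (fun p => coeff p (i + D)) (hT D)
  simp only [coeff_X_pow_mul] at hc
  rw [← hc, trace, finsetSum_coeff, coeff_zero]
  refine Finset.sum_eq_zero fun a _ => ?_
  rw [diag_apply, mul_apply, finsetSum_coeff]
  refine Finset.sum_eq_zero fun b _ => ?_
  rw [map_apply, coeff_mul_C, coeff_eq_zero_of_natDegree_lt ((hD a b).trans_le (by omega)),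
    zero_mul]

/-- A matrix over a commutative `ℚ`-algebra all of whose positive powers are traceless is
nilpotent, with exponent its size. -/
lemma pow_eq_zero_of_trace_pow {R : Type*} [CommRing R] [Algebra ℚ R] {k : ℕ}
    (M : Matrix (Fin k) (Fin k) R) (h : ∀ j, 1 ≤ j → trace (M ^ j) = 0) : M ^ k = 0 := by
  nontriviality R
  -- the Euler equation `X p' = k p`
  have hE : X * derivative M.charpoly = (k : R[X]) * M.charpoly := by
    have h1 : adjugate (charmatrix M) * charmatrix M = M.charpoly • 1 := adjugate_mul _
    have h3 : charmatrix M = (X : R[X]) • 1 - M.map C := by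
      rw [charmatrix, scalar_apply, ← smul_one_eq_diagonal]; rfl
    have h4 := congrArg trace h1
    nth_rw 2 [h3] at h4
    rw [mul_sub, mul_smul_comm, mul_one, trace_sub, trace_smul, trace_smul,
      trace_adjugate_charmatrix_mul M h, sub_zero, ← derivative_charpoly_eq_trace_adjugate,
      trace_one, smul_eq_mul, smul_eq_mul, Fintype.card_fin] at h4
    rw [h4, mul_comm]
  have hp : M.charpoly = X ^ k := by
    ext i
    rw [coeff_X_pow]
    split_ifs with hi
    · have := (charpoly_monic M).coeff_natDegree
      rw [charpoly_natDegree_eq_dim, Fintype.card_fin] at this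
      rw [hi, this]
    · have hc := congrArg (fun p => coeff p i) hE
      have hc' : (i : R) * M.charpoly.coeff i = (k : R) * M.charpoly.coeff i := by
        rw [← C_eq_natCast] at hc
        simp only [coeff_C_mul] at hc
        rw [← hc]
        cases i with
        | zero => simp
        | succ i => rw [coeff_X_mul, coeff_derivative]; push_cast; ring
      have hq : ((i : ℚ) - k) • M.charpoly.coeff i = 0 := by
        rw [sub_smul, Nat.cast_smul_eq_nsmul, Nat.cast_smul_eq_nsmul, nsmul_eq_mul, nsmul_eq_mul,
          hc', sub_self]
      refine (smul_eq_zero.mp hq).resolve_left fun h0 => hi ?_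
      exact_mod_cast sub_eq_zero.mp h0
  have := aeval_self_charpoly M
  rwa [hp, map_pow, aeval_X] at this

/-- Cyclicity of the trace, up to the Koszul sign, for matrices with homogeneous entries. -/
lemma trace_mul_graded {A : Type*} [Ring A] [Algebra ℚ A] (𝒜 : ℕ → Submodule ℚ A)
    (hcomm : ∀ (m n : ℕ), ∀ a ∈ 𝒜 m, ∀ b ∈ 𝒜 n, a * b = ((-1 : ℚ) ^ (m * n)) • (b * a))
    {k p q : ℕ} (P Q : Matrix (Fin k) (Fin k) A)
    (hP : ∀ i j, P i j ∈ 𝒜 p) (hQ : ∀ i j, Q i j ∈ 𝒜 q) :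
    trace (P * Q) = ((-1 : ℚ) ^ (p * q)) • trace (Q * P) := by
  simp only [trace, diag_apply, mul_apply, Finset.smul_sum]
  rw [Finset.sum_comm]
  exact Finset.sum_congr rfl fun i _ => Finset.sum_congr rfl fun j _ =>
    hcomm p q _ (hP j i) _ (hQ i j)

theorem beta_stable_vanishing
    {A : Type*} [Ring A] [Algebra ℚ A]
    (𝒜 : ℕ → Submodule ℚ A)
    (hdecomp : DirectSum.IsInternal 𝒜)
    (hone : (1 : A) ∈ 𝒜 0)
    (hgmul : ∀ (m n : ℕ), ∀ a ∈ 𝒜 m, ∀ b ∈ 𝒜 n, a * b ∈ 𝒜 (m + n))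
    (hcomm : ∀ (m n : ℕ), ∀ a ∈ 𝒜 m, ∀ b ∈ 𝒜 n,
      a * b = ((-1 : ℚ) ^ (m * n)) • (b * a))
    (d : A →ₗ[ℚ] A)
    (hd2 : ∀ a : A, d (d a) = 0)
    (hddeg : ∀ (n : ℕ), ∀ a ∈ 𝒜 n, d a ∈ 𝒜 (n + 1))
    (hleib : ∀ (m : ℕ), ∀ a ∈ 𝒜 m, ∀ b : A,
      d (a * b) = d a * b + ((-1 : ℚ) ^ m) • (a * d b))
    {k : ℕ} (X Y : Matrix (Fin k) (Fin k) A)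
    (hX0 : ∀ i j, X i j ∈ 𝒜 0) (hY0 : ∀ i j, Y i j ∈ 𝒜 0)
    (hXY : X * Y = 1) (hYX : Y * X = 1) :
    ∀ m : ℕ, 2 * k ≤ m → Matrix.trace ((Y * X.map (fun a => d a)) ^ m) = 0 := by
  intro m hm
  set μ := Y * X.map (fun a => d a) with hμ
  have hmul : ∀ (p q : ℕ) (P Q : Matrix (Fin k) (Fin k) A), (∀ i j, P i j ∈ 𝒜 p) →
      (∀ i j, Q i j ∈ 𝒜 q) → ∀ i j, (P * Q) i j ∈ 𝒜 (p + q) := by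
    intro p q P Q hP hQ i j
    rw [mul_apply]
    exact Submodule.sum_mem _ fun l _ => hgmul p q _ (hP i l) _ (hQ l j)
  have hμ1 : ∀ i j, μ i j ∈ 𝒜 1 := by
    have := hmul 0 1 Y (X.map (fun a => d a)) hY0 (fun i j => hddeg 0 _ (hX0 i j))
    simpa using this
  have hμn : ∀ n i j, (μ ^ n) i j ∈ 𝒜 n := by
    intro n
    induction n with
    | zero =>
      intro i j
      rw [pow_zero, one_apply]
      split_ifs
      · exact hone
      · exact Submodule.zero_mem _
    | succ n ih =>
      rw [pow_succ]
      exact hmul n 1 _ _ ih hμ1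
  have hcenter : ∀ a ∈ 𝒜 2, a ∈ Subalgebra.center ℚ A := by
    intro a ha
    rw [Subalgebra.mem_center_iff]
    intro b
    have hb : b ∈ iSup 𝒜 := by rw [hdecomp.submodule_iSup_eq_top]; trivial
    induction hb using Submodule.iSup_induction' with
    | mem n x hx =>
      rw [hcomm n 2 x hx a ha, (even_two.mul_left n).neg_one_pow, one_smul]
    | zero => simp
    | add x y _ _ hx hy => rw [add_mul, mul_add, hx, hy]
  let f : Subalgebra.center ℚ A →+* A := (Subalgebra.center ℚ A).val.toRingHom
  have hf : Function.Injective f := Subtype.val_injective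
  obtain ⟨M, hM⟩ : ∃ M : Matrix (Fin k) (Fin k) (Subalgebra.center ℚ A),
      f.mapMatrix M = μ ^ 2 :=
    ⟨Matrix.of fun i j => ⟨(μ ^ 2) i j, hcenter _ (hμn 2 i j)⟩, rfl⟩
  have htr : ∀ j, 1 ≤ j → trace (M ^ j) = 0 := by
    intro j hj
    apply hf
    have h1 : f (trace (M ^ j)) = trace (μ ^ (2 * j)) := by
      rw [pow_mul, ← hM, ← map_pow]
      exact AddMonoidHom.map_trace f _
    obtain ⟨l, rfl⟩ : ∃ l, j = l + 1 := ⟨j - 1, by omega⟩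
    have h2 := trace_mul_graded 𝒜 hcomm μ (μ ^ (2 * l + 1)) hμ1 (hμn _)
    rw [← pow_succ', ← pow_succ, one_mul, (odd_two_mul_add_one l).neg_one_pow, neg_one_smul] at h2
    have h3 : (2 : ℚ) • trace (μ ^ (2 * l + 1 + 1)) = 0 := by
      rw [two_smul]; nth_rw 1 [h2]; exact neg_add_cancel _
    rw [h1, map_zero]
    exact (smul_eq_zero.mp h3).resolve_left two_ne_zero
  have hnil : μ ^ (2 * k) = 0 := by
    rw [pow_mul, ← hM, ← map_pow, pow_eq_zero_of_trace_pow M htr, map_zero]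
  rw [← Nat.add_sub_cancel' hm, pow_add, hnil, zero_mul, trace_zero]
end

section
/- Let B₁ be a symmetric invertible m×m matrix over A⁰ and ℓ a 1×m row vector with entries in A⁰. For every i ≥ 0 with i ≡ 0 or 1 (mod 4), the 1×1 matrix (dℓ)·B₁·(B₁⁻¹·dB₁)^i·(dℓ)ᵀ is zero (here d is applied entrywise). In particular, the elements ν_i = b⁻¹·((dℓ)·B₁·(B₁⁻¹dB₁)^i·(dℓ)ᵀ) vanish for i ≡ 0, 1 (mod 4) and any invertible b ∈ A⁰. -/
/-!
For matrices `M`, `N` with entries of degrees `p`, `q`, graded commutativity gives the signed rule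
`(M N)ᵀ = (-1)^(pq) Nᵀ Mᵀ` (`transpose_mul_graded`). Put `S_i = B₁ (C dB₁)^i`, of degree `i`. Since
`S_{i+1} = S_i C dB₁ = dB₁ C S_i`, with `B₁`, `C` and `dB₁` symmetric, induction gives
`S_iᵀ = (-1)^(i choose 2) S_i` (`transpose_S`). The `1 × 1` matrix `x = dℓ S_i (dℓ)ᵀ` equals its
transpose, while the signed rule turns this transpose into `-dℓ S_iᵀ (dℓ)ᵀ = -(-1)^(i choose 2) x`.
For `i ≡ 0, 1 (mod 4)` the number `i choose 2` is even, so `x = -x` and `x = 0`.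
-/

open Matrix

section Graded

variable {A : Type*} [Ring A] [Algebra ℚ A] {𝒜 : ℕ → Submodule ℚ A}

/-- All entries of `M` are homogeneous of degree `p`. -/
def HomogEntries {m n : Type*} (𝒜 : ℕ → Submodule ℚ A) (p : ℕ) (M : Matrix m n A) : Prop :=
  ∀ i j, M i j ∈ 𝒜 p

lemma HomogEntries.mul {l m n : Type*} [Fintype m]
    (hgmul : ∀ (m n : ℕ), ∀ a ∈ 𝒜 m, ∀ b ∈ 𝒜 n, a * b ∈ 𝒜 (m + n))
    {p q : ℕ} {M : Matrix l m A} {N : Matrix m n A}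
    (hM : HomogEntries 𝒜 p M) (hN : HomogEntries 𝒜 q N) : HomogEntries 𝒜 (p + q) (M * N) := by
  intro i j
  rw [Matrix.mul_apply]
  exact Submodule.sum_mem _ fun k _ => hgmul _ _ _ (hM i k) _ (hN k j)

lemma transpose_mul_graded_s10 {l m n : Type*} [Fintype m]
    (hcomm : ∀ (m n : ℕ), ∀ a ∈ 𝒜 m, ∀ b ∈ 𝒜 n,
      a * b = ((-1 : ℚ) ^ (m * n)) • (b * a))
    {p q : ℕ} {M : Matrix l m A} {N : Matrix m n A}
    (hM : HomogEntries 𝒜 p M) (hN : HomogEntries 𝒜 q N) :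
    (M * N)ᵀ = ((-1 : ℚ) ^ (p * q)) • (Nᵀ * Mᵀ) := by
  ext i j
  simp only [Matrix.transpose_apply, Matrix.mul_apply, Matrix.smul_apply, Finset.smul_sum]
  exact Finset.sum_congr rfl fun k _ => hcomm _ _ _ (hM j k) _ (hN k i)

variable {n : Type*} [Fintype n]

/-- A quadratic form in degree-`1` variables with a homogeneous coefficient matrix `S = Sᵀ`
vanishes, because the variables anticommute. -/
lemma quadratic_eq_zero
    (hgmul : ∀ (m n : ℕ), ∀ a ∈ 𝒜 m, ∀ b ∈ 𝒜 n, a * b ∈ 𝒜 (m + n))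
    (hcomm : ∀ (m n : ℕ), ∀ a ∈ 𝒜 m, ∀ b ∈ 𝒜 n,
      a * b = ((-1 : ℚ) ^ (m * n)) • (b * a))
    {i : ℕ} {S : Matrix n n A} {u : Matrix (Fin 1) n A}
    (hS : HomogEntries 𝒜 i S) (hu : HomogEntries 𝒜 1 u) (hSs : Sᵀ = S) :
    u * S * uᵀ = 0 := by
  have hut : HomogEntries 𝒜 1 uᵀ := fun a b => hu b a
  have hself : (u * S * uᵀ)ᵀ = u * S * uᵀ := by
    ext a b
    rw [Matrix.transpose_apply, Subsingleton.elim a b]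
  have h := transpose_mul_graded_s10 hcomm (hu.mul hgmul hS) hut
  rw [hself, transpose_mul_graded_s10 hcomm hu hS, hSs, Matrix.transpose_transpose, Matrix.mul_smul,
    smul_smul, ← pow_add, ← Matrix.mul_assoc] at h
  have hodd : Odd ((1 + i) * 1 + 1 * i) := ⟨i, by ring⟩
  rw [hodd.neg_one_pow, neg_one_smul] at h
  -- division by `2` is available entrywise since `A` is a `ℚ`-algebra
  have h2 : (2 : ℚ) • (u * S * uᵀ) = 0 := by
    rw [two_smul]
    nth_rewrite 1 [h]
    exact neg_add_cancel _
  exact (smul_eq_zero.mp h2).resolve_left two_ne_zero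

variable [DecidableEq n]

/-- The inverse of a symmetric matrix of degree `0` is symmetric. -/
lemma transpose_inverse_eq
    (hcomm : ∀ (m n : ℕ), ∀ a ∈ 𝒜 m, ∀ b ∈ 𝒜 n,
      a * b = ((-1 : ℚ) ^ (m * n)) • (b * a))
    {B C : Matrix n n A} (hB : HomogEntries 𝒜 0 B) (hC : HomogEntries 𝒜 0 C)
    (hBs : Bᵀ = B) (hBC : B * C = 1) : Cᵀ = C := by
  have h := transpose_mul_graded_s10 hcomm hB hC
  rw [hBC, hBs, Matrix.transpose_one, mul_zero, pow_zero, one_smul] at h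
  calc Cᵀ = Cᵀ * (B * C) := by rw [hBC, mul_one]
    _ = C := by rw [← mul_assoc, ← h, one_mul]

/-- `B (C D)^i` has degree `i`; here `D` plays the role of `dB`. -/
lemma homogEntries_S
    (hgmul : ∀ (m n : ℕ), ∀ a ∈ 𝒜 m, ∀ b ∈ 𝒜 n, a * b ∈ 𝒜 (m + n))
    {B C D : Matrix n n A} (hB : HomogEntries 𝒜 0 B) (hC : HomogEntries 𝒜 0 C)
    (hD : HomogEntries 𝒜 1 D) (i : ℕ) : HomogEntries 𝒜 i (B * (C * D) ^ i) := by
  induction i with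
  | zero => simpa using hB
  | succ i ih =>
    rw [pow_succ, ← mul_assoc]
    have h := ih.mul hgmul (hC.mul hgmul hD)
    rwa [zero_add] at h

lemma transpose_S
    (hgmul : ∀ (m n : ℕ), ∀ a ∈ 𝒜 m, ∀ b ∈ 𝒜 n, a * b ∈ 𝒜 (m + n))
    (hcomm : ∀ (m n : ℕ), ∀ a ∈ 𝒜 m, ∀ b ∈ 𝒜 n,
      a * b = ((-1 : ℚ) ^ (m * n)) • (b * a))
    {B C D : Matrix n n A} (hB : HomogEntries 𝒜 0 B) (hC : HomogEntries 𝒜 0 C)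
    (hD : HomogEntries 𝒜 1 D) (hBs : Bᵀ = B) (hDs : Dᵀ = D)
    (hBC : B * C = 1) (hCB : C * B = 1) (i : ℕ) :
    (B * (C * D) ^ i)ᵀ = ((-1 : ℚ) ^ (i.choose 2)) • (B * (C * D) ^ i) := by
  induction i with
  | zero => simpa using hBs
  | succ i ih =>
    have hCs := transpose_inverse_eq hcomm hB hC hBs hBC
    have hCD : (C * D)ᵀ = D * C := by
      rw [transpose_mul_graded_s10 hcomm hC hD, hCs, hDs, zero_mul, pow_zero, one_smul]
    -- both products equal `D (C D)^i`
    have hswap : D * C * (B * (C * D) ^ i) = B * (C * D) ^ (i + 1) := by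
      rw [pow_succ', mul_assoc D, ← mul_assoc C, hCB, one_mul, ← mul_assoc B, ← mul_assoc B, hBC,
        one_mul]
    have hS := homogEntries_S hgmul hB hC hD i
    have h := transpose_mul_graded_s10 hcomm hS (hC.mul hgmul hD)
    rw [hCD, ih, Matrix.mul_smul, hswap, mul_assoc, ← pow_succ, smul_smul, ← pow_add] at h
    rw [h, Nat.choose_succ_succ' i 1, Nat.choose_one_right, zero_add, mul_one]

end Graded

lemma even_choose_two {i : ℕ} (hi : i % 4 = 0 ∨ i % 4 = 1) : Even (i.choose 2) := by
  rw [Nat.choose_two_right]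
  obtain ⟨k, rfl | rfl⟩ : ∃ k, i = 4 * k ∨ i = 4 * k + 1 := ⟨i / 4, by omega⟩
  · rw [show 4 * k * (4 * k - 1) = 2 * (2 * (k * (4 * k - 1))) by ring,
      Nat.mul_div_cancel_left _ two_pos]
    exact even_two_mul _
  · rw [Nat.add_sub_cancel, show (4 * k + 1) * (4 * k) = 2 * (2 * ((4 * k + 1) * k)) by ring,
      Nat.mul_div_cancel_left _ two_pos]
    exact even_two_mul _

theorem nu_vanishes_mod_four
    {A : Type*} [Ring A] [Algebra ℚ A]
    (𝒜 : ℕ → Submodule ℚ A)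
    (hdecomp : DirectSum.IsInternal 𝒜)
    (hone : (1 : A) ∈ 𝒜 0)
    (hgmul : ∀ (m n : ℕ), ∀ a ∈ 𝒜 m, ∀ b ∈ 𝒜 n, a * b ∈ 𝒜 (m + n))
    (hcomm : ∀ (m n : ℕ), ∀ a ∈ 𝒜 m, ∀ b ∈ 𝒜 n,
      a * b = ((-1 : ℚ) ^ (m * n)) • (b * a))
    (d : A →ₗ[ℚ] A)
    (hd2 : ∀ a : A, d (d a) = 0)
    (hddeg : ∀ (n : ℕ), ∀ a ∈ 𝒜 n, d a ∈ 𝒜 (n + 1))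
    (hleib : ∀ (m : ℕ), ∀ a ∈ 𝒜 m, ∀ b : A,
      d (a * b) = d a * b + ((-1 : ℚ) ^ m) • (a * d b))
    {m : ℕ} (B₁ C : Matrix (Fin m) (Fin m) A)
    (hB0 : ∀ i j, B₁ i j ∈ 𝒜 0) (hC0 : ∀ i j, C i j ∈ 𝒜 0)
    (hBsymm : B₁ᵀ = B₁)
    (hBC : B₁ * C = 1) (hCB : C * B₁ = 1)
    (ℓ : Matrix (Fin 1) (Fin m) A)
    (hℓ0 : ∀ i j, ℓ i j ∈ 𝒜 0) :
    ∀ i : ℕ, (i % 4 = 0 ∨ i % 4 = 1) →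
      ((ℓ.map (fun a => d a)) * B₁ * ((C * B₁.map (fun a => d a)) ^ i) * (ℓ.map (fun a => d a))ᵀ = 0 ∧
      ∀ b bInv : A, b ∈ 𝒜 0 → bInv ∈ 𝒜 0 →
        b * bInv = 1 → bInv * b = 1 →
        bInv * (((ℓ.map (fun a => d a)) * B₁ * ((C * B₁.map (fun a => d a)) ^ i) * (ℓ.map (fun a => d a))ᵀ) 0 0) = 0) := by
  intro i hi
  have hD : HomogEntries 𝒜 1 (B₁.map fun a => d a) := fun a b => hddeg 0 _ (hB0 a b)
  have hu : HomogEntries 𝒜 1 (ℓ.map fun a => d a) := fun a b => hddeg 0 _ (hℓ0 a b)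
  have hDs : (B₁.map fun a => d a)ᵀ = B₁.map fun a => d a := by
    rw [← Matrix.transpose_map, hBsymm]
  have hSs := transpose_S hgmul hcomm hB0 hC0 hD hBsymm hDs hBC hCB i
  rw [(even_choose_two hi).neg_one_pow, one_smul] at hSs
  have h := quadratic_eq_zero hgmul hcomm (homogEntries_S hgmul hB0 hC0 hD i) hu hSs
  rw [← Matrix.mul_assoc] at h
  refine ⟨h, fun b bInv _ _ _ _ => ?_⟩
  rw [h, Matrix.zero_apply, mul_zero]
end

section
/- Dual Matrix-Tree theorem: the graph polynomial satisfies Ψ_G = det(Hᵀ·diag(x_e)·H) = Σ_{T} ∏_{e ∉ T} x_e in ℤ[x_e : e ∈ E], where the sum is over all spanning trees T of G. In particular, since a nonempty connected graph has at least one spanning tree, Ψ_G ≠ 0. -/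
/-!
The Cauchy–Binet expansion of `det (Hᵀ * diag x * H)` is the sum over `S ⊆ E` with `|S| = |B|` of
`det (H_S) ^ 2 * ∏ e ∈ S, x e`, where `H_S` consists of the rows of `H` in `S`. Rank–nullity gives
`|E| = |B| + (|V| - 1)`, so the complement `T` of such an `S` has `|V| - 1` elements, and it remains
to see that `det (H_S) ^ 2` is `1` if `T` is a spanning tree and `0` otherwise (`minor_sq`).

* If the columns of `ε` in `T` are dependent, clearing denominators gives a nonzero integer kernel
  vector of `ε` supported on `T`. It has the form `H c` with `c ≠ 0`, and `H_S c = 0`, so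
  `det H_S = 0`.
* If they are independent, they form a square matrix of determinant `±1`, because incidence
  matrices are totally unimodular (`det_incidence`). Hence every integer vector on `S` extends to
  an integer kernel vector of `ε`. Thus `H_S` is surjective on integer vectors and its determinant
  is a unit.

The determinant is nonzero because its value at `x = 1` is the Gram determinant `det (Hᵀ * H)` of
an injective integer matrix.
-/

open Matrix MvPolynomial

open scoped Classical

namespace DualMatrixTree

/-! ### The Cauchy–Binet expansion -/

section CauchyBinet

variable {m n R : Type*} [Fintype m] [Fintype n] [DecidableEq n] [CommRing R]

lemma det_mul_eq_sum_fun (A : Matrix n m R) (M : Matrix m n R) :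
    (A * M).det = ∑ f : n → m, (∏ i, A i (f i)) * (M.submatrix f id).det := by
  have h : (A * M) = fun i => ∑ j, A i j • M j := by
    ext i k
    simp [Matrix.mul_apply]
  have h2 := (detRowAlternating (n := n) (R := R)).toMultilinearMap.map_sum
    (fun i j => A i j • M j)
  have h3 : (A * M).det = (detRowAlternating (n := n) (R := R)).toMultilinearMap
      (fun i => ∑ j, A i j • M j) := by
    rw [h]; rfl
  rw [h3, h2]
  refine Finset.sum_congr rfl fun f _ => ?_
  rw [MultilinearMap.map_smul_univ, smul_eq_mul]
  rfl

/-- The terms of the expansion whose index function has image `S` vanish unless `S` has as many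
elements as there are rows: a repeated index gives a repeated row. -/
lemma sum_fiber_of_card_ne [DecidableEq m] (A : Matrix n m R) (M : Matrix m n R) (S : Finset m)
    (hS : S.card ≠ Fintype.card n) :
    ∑ f : n → m with Finset.univ.image f = S,
      (∏ i, A i (f i)) * (M.submatrix f id).det = 0 := by
  refine Finset.sum_eq_zero fun f hf => ?_
  rw [Finset.mem_filter] at hf
  have hinj : ¬ Function.Injective f := by
    intro hi
    apply hS
    rw [← hf.2, Finset.card_image_of_injective _ hi, Finset.card_univ]
  rw [Function.Injective] at hinj
  push Not at hinj
  obtain ⟨a, b, hab, hne⟩ := hinj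
  rw [Matrix.det_zero_of_row_eq hne (by ext k; simp [hab]), mul_zero]

/-- The terms of the expansion whose index function has image `S` assemble to the product of the
two maximal minors on `S`, since these functions are the reorderings of one enumeration of `S`. -/
lemma sum_fiber_of_equiv [DecidableEq m] (A : Matrix n m R) (M : Matrix m n R) (S : Finset m)
    (e : n ≃ {x // x ∈ S}) :
    ∑ f : n → m with Finset.univ.image f = S,
      (∏ i, A i (f i)) * (M.submatrix f id).det =
    (A.submatrix id (fun i => (e i : m))).det * (M.submatrix (fun i => (e i : m)) id).det := by
  have key : ∀ σ : Equiv.Perm n,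
      (M.submatrix (fun i => (e (σ i) : m)) id).det =
        ((Equiv.Perm.sign σ : ℤ) : R) * (M.submatrix (fun i => (e i : m)) id).det := by
    intro σ
    rw [← Matrix.det_permute]
    rfl
  have hA : (A.submatrix id (fun i => (e i : m))).det =
      ∑ σ : Equiv.Perm n, ((Equiv.Perm.sign σ : ℤ) : R) * ∏ i, A i (e (σ i)) := by
    rw [← Matrix.det_transpose, Matrix.det_apply']
    rfl
  rw [hA, Finset.sum_mul]
  symm
  refine Finset.sum_bij (fun σ _ => fun i => (e (σ i) : m)) ?_ ?_ ?_ ?_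
  · intro σ _
    rw [Finset.mem_filter]
    refine ⟨Finset.mem_univ _, ?_⟩
    ext x
    simp only [Finset.mem_image, Finset.mem_univ, true_and]
    constructor
    · rintro ⟨i, rfl⟩
      exact (e (σ i)).2
    · intro hx
      exact ⟨σ.symm (e.symm ⟨x, hx⟩), by simp⟩
  · intro σ _ τ _ h
    ext i
    exact e.injective (Subtype.ext (congrFun h i))
  · intro f hf
    rw [Finset.mem_filter] at hf
    have hmem : ∀ i, f i ∈ S := fun i => by
      rw [← hf.2]; exact Finset.mem_image_of_mem f (Finset.mem_univ i)
    have hsurj : Function.Surjective fun i => e.symm ⟨f i, hmem i⟩ := by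
      intro j
      have hj : (e j : m) ∈ Finset.univ.image f := by rw [hf.2]; exact (e j).2
      obtain ⟨i, -, hi⟩ := Finset.mem_image.1 hj
      exact ⟨i, by simp [hi]⟩
    refine ⟨Equiv.ofBijective _ (Finite.surjective_iff_bijective.1 hsurj), Finset.mem_univ _, ?_⟩
    funext i
    simp
  · intro σ _
    simp only [key]
    ring

end CauchyBinet

/-! ### Unimodularity of incidence matrices -/

/-- Every square submatrix of an incidence matrix has determinant `0` or `±1`. Rows are indexed by
distinct vertices `r i`, columns by edges `a j → b j`, with endpoints possibly among the
discarded vertices. -/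
lemma det_incidence {V : Type*} [DecidableEq V] : ∀ (k : ℕ) (r : Fin k → V)
    (_ : Function.Injective r) (a b : Fin k → V),
    (Matrix.of fun i j => (if r i = b j then (1 : ℤ) else 0) - (if r i = a j then 1 else 0)).det
      ∈ ({0, 1, -1} : Set ℤ) := by
  intro k
  induction k with
  | zero => intro r _ a b; simp
  | succ k ih =>
    intro r hr a b
    set M : Matrix (Fin (k + 1)) (Fin (k + 1)) ℤ :=
      Matrix.of fun i j => (if r i = b j then (1 : ℤ) else 0) - (if r i = a j then 1 else 0)
      with hM
    have hMij : ∀ i j, M i j =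
      (if r i = b j then (1 : ℤ) else 0) - (if r i = a j then 1 else 0) := fun i j => rfl
    by_cases hall : ∀ j, (∃ i, r i = a j) ∧ (∃ i, r i = b j)
    · -- Every edge has both ends among the chosen vertices, so the rows add up to zero.
      left
      refine Matrix.exists_vecMul_eq_zero_iff.1 ⟨fun _ => 1, ?_, ?_⟩
      · intro h
        simpa using congrFun h 0
      · funext j
        obtain ⟨⟨p, hp⟩, ⟨q, hq⟩⟩ := hall j
        simp only [Matrix.vecMul, dotProduct, hMij, one_mul, Finset.sum_sub_distrib, ← hp, ← hq,
          hr.eq_iff]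
        simp
    · -- Some column has at most one nonzero entry; expand along it.
      have hcol : ∃ j i₀, ∀ i, i ≠ i₀ → M i j = 0 := by
        push Not at hall
        obtain ⟨j, hj⟩ := hall
        refine ⟨j, ?_⟩
        by_cases ha : ∃ i, r i = a j
        · have hb := hj ha
          obtain ⟨p, hp⟩ := ha
          refine ⟨p, fun i hi => ?_⟩
          rw [hMij, if_neg (hb i), ← hp, if_neg (fun h => hi (hr h)), sub_zero]
        · push Not at ha
          by_cases hb : ∃ i, r i = b j
          · obtain ⟨p, hp⟩ := hb
            refine ⟨p, fun i hi => ?_⟩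
            rw [hMij, if_neg (ha i), ← hp, if_neg (fun h => hi (hr h)), sub_zero]
          · push Not at hb
            exact ⟨0, fun i _ => by rw [hMij, if_neg (ha i), if_neg (hb i), sub_zero]⟩
      obtain ⟨j, i₀, h0⟩ := hcol
      rw [Matrix.det_succ_column M j, Finset.sum_eq_single i₀
        (fun i _ hi => by rw [h0 i hi]; ring) (by simp)]
      have h1 := ih (r ∘ i₀.succAbove) (hr.comp Fin.succAbove_right_injective)
        (a ∘ j.succAbove) (b ∘ j.succAbove)
      have h2 : (M.submatrix i₀.succAbove j.succAbove).det ∈ ({0, 1, -1} : Set ℤ) := h1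
      have h3 : M i₀ j ∈ ({0, 1, -1} : Set ℤ) := by
        rw [hMij]
        split_ifs <;> simp
      rcases neg_one_pow_eq_or ℤ ((i₀ : ℕ) + (j : ℕ)) with h4 | h4 <;> rw [h4] <;>
      rcases h2 with h2 | h2 | h2 <;> rcases h3 with h3 | h3 | h3 <;> rw [h2, h3] <;> simp

lemma det_incidence' {V ι : Type*} [DecidableEq V] [Fintype ι] [DecidableEq ι] (r : ι → V)
    (hr : Function.Injective r) (a b : ι → V) :
    (Matrix.of fun i j => (if r i = b j then (1 : ℤ) else 0) - (if r i = a j then 1 else 0)).det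
      ∈ ({0, 1, -1} : Set ℤ) := by
  have e := (Fintype.equivFin ι).symm
  have h := det_incidence _ (r ∘ e) (hr.comp e.injective) (a ∘ e) (b ∘ e)
  rw [← Matrix.det_submatrix_equiv_self e]
  exact h

/-! ### Maximal minors of a kernel basis -/

section Kernel

variable {I E B : Type*} [Fintype E] [Fintype B]

/-- A dependence among the columns of `N` outside `S` is a kernel vector `H c ≠ 0` vanishing on
`S`, so `c` is a nonzero kernel vector of the rows of `H` on `S`. -/
lemma det_eq_zero_of_dependent [DecidableEq E] [DecidableEq B]
    (N : Matrix I E ℤ) (H : Matrix E B ℤ)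
    (hspan : ∀ f : E → ℤ, N *ᵥ f = 0 → ∃ c : B → ℤ, H *ᵥ c = f)
    (S : Finset E) (e : B ≃ {x // x ∈ S})
    (hT : ¬ LinearIndependent ℤ fun x : {x // x ∈ Sᶜ} => (fun v => N v (x : E))) :
    (H.submatrix (fun i => (e i : E)) id).det = 0 := by
  obtain ⟨g, hg, ⟨x₀, hx₀⟩⟩ := Fintype.not_linearIndependent_iff.1 hT
  set f : E → ℤ := fun x => if h : x ∈ Sᶜ then g ⟨x, h⟩ else 0 with hf
  have hNf : N *ᵥ f = 0 := by
    funext v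
    have h1 := congrFun hg v
    simp only [Finset.sum_apply, Pi.smul_apply, smul_eq_mul, Pi.zero_apply] at h1
    rw [Pi.zero_apply, ← h1, Matrix.mulVec, dotProduct,
      ← Finset.sum_subset (Finset.subset_univ Sᶜ), ← Finset.sum_coe_sort Sᶜ]
    · refine Finset.sum_congr rfl fun x _ => ?_
      simp only [hf, dif_pos x.2]
      ring
    · intro x _ hx
      simp only [hf, dif_neg hx, mul_zero]
  obtain ⟨c, hc⟩ := hspan f hNf
  refine Matrix.exists_mulVec_eq_zero_iff.1 ⟨c, ?_, ?_⟩
  · rintro rfl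
    have h2 := congrFun hc x₀
    rw [Matrix.mulVec_zero, Pi.zero_apply] at h2
    simp only [hf, dif_pos x₀.2] at h2
    exact hx₀ h2.symm
  · funext i
    have h2 := congrFun hc (e i)
    have h3 : (e i : E) ∉ Sᶜ := by simp
    simp only [hf, dif_neg h3] at h2
    exact h2

/-- If the columns of `N` outside `S` form a unimodular square matrix, then every integer vector
on `S` extends to an integer kernel vector of `N`, hence the rows of `H` on `S` define a
surjection onto the integer lattice. -/
lemma isUnit_det_of_unimodular [Fintype I] [DecidableEq I] [DecidableEq E] [DecidableEq B]
    (N : Matrix I E ℤ) (H : Matrix E B ℤ)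
    (hspan : ∀ f : E → ℤ, N *ᵥ f = 0 → ∃ c : B → ℤ, H *ᵥ c = f)
    (S : Finset E) (e : B ≃ {x // x ∈ S}) (g : I ≃ {x // x ∈ Sᶜ})
    (hT : IsUnit (N.submatrix id (fun i => (g i : E))).det) :
    IsUnit (H.submatrix (fun i => (e i : E)) id).det := by
  rw [← Matrix.isUnit_iff_isUnit_det, ← Matrix.mulVec_surjective_iff_isUnit] at hT ⊢
  intro y
  set F : E → ℤ := fun x => if h : x ∈ S then y (e.symm ⟨x, h⟩) else 0 with hF
  obtain ⟨z, hz⟩ := hT (-(N *ᵥ F))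
  set G : E → ℤ := fun x => if h : x ∈ Sᶜ then z (g.symm ⟨x, h⟩) else 0 with hG
  have hNG : N *ᵥ G = -(N *ᵥ F) := by
    rw [← hz]
    funext v
    rw [Matrix.mulVec, dotProduct,
      ← Finset.sum_subset (Finset.subset_univ Sᶜ), ← Finset.sum_coe_sort Sᶜ,
      ← Equiv.sum_comp g]
    · rw [Matrix.mulVec, dotProduct]
      refine Finset.sum_congr rfl fun i _ => ?_
      simp only [hG, dif_pos (g i).2, Subtype.coe_eta, Equiv.symm_apply_apply,
        Matrix.submatrix_apply, id]
    · intro x _ hx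
      simp only [hG, dif_neg hx, mul_zero]
  obtain ⟨c, hc⟩ := hspan (F + G) (by rw [Matrix.mulVec_add, hNG, add_neg_cancel])
  refine ⟨c, ?_⟩
  funext i
  have h2 := congrFun hc (e i)
  have h3 : (e i : E) ∉ Sᶜ := by simp
  simp only [Pi.add_apply, hF, hG, dif_neg h3, dif_pos (e i).2, Subtype.coe_eta,
    Equiv.symm_apply_apply, add_zero] at h2
  exact h2

lemma exists_int_smul_eq {ι : Type*} [Finite ι] (f : ι → ℚ) :
    ∃ (b : ℤ) (f' : ι → ℤ), b ≠ 0 ∧ (b : ℚ) • f = fun x => (f' x : ℚ) := by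
  obtain ⟨b, hb⟩ := IsLocalization.exist_integer_multiples_of_finite (nonZeroDivisors ℤ) f
  choose f' hf' using hb
  refine ⟨b, f', nonZeroDivisors.coe_ne_zero b, ?_⟩
  funext x
  have := hf' x
  simp only [algebraMap_int_eq, eq_intCast] at this
  rw [this, Pi.smul_apply, smul_eq_mul, zsmul_eq_mul]

/-- The number of columns of `H` is the first Betti number: over `ℚ` the columns of `H` form a
basis of the kernel of `N`. -/
lemma card_add_card [Fintype I] (N : Matrix I E ℤ) (H : Matrix E B ℤ)
    (hN : LinearIndependent ℚ (N.map (Int.cast : ℤ → ℚ)).row)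
    (hinj : Function.Injective H.mulVec)
    (hker : ∀ c : B → ℤ, N *ᵥ (H *ᵥ c) = 0)
    (hspan : ∀ f : E → ℤ, N *ᵥ f = 0 → ∃ c : B → ℤ, H *ᵥ c = f) :
    Fintype.card I + Fintype.card B = Fintype.card E := by
  set Nq : Matrix I E ℚ := N.map (Int.cast : ℤ → ℚ)
  set Hq : Matrix E B ℚ := H.map (Int.cast : ℤ → ℚ)
  have hNq : ∀ f : E → ℤ, Nq *ᵥ (fun x => (f x : ℚ)) = fun v => (((N *ᵥ f) v : ℤ) : ℚ) := by
    intro f; funext v; simp [Nq, Matrix.mulVec, dotProduct]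
  have hHq : ∀ c : B → ℤ, Hq *ᵥ (fun x => (c x : ℚ)) = fun v => (((H *ᵥ c) v : ℤ) : ℚ) := by
    intro f; funext v; simp [Hq, Matrix.mulVec, dotProduct]
  have hHinj : Function.Injective Hq.mulVecLin := by
    rw [injective_iff_map_eq_zero]
    intro c hc
    obtain ⟨b, c', hb, hc'⟩ := exists_int_smul_eq c
    have h1 : H *ᵥ c' = 0 := by
      have h2 : Hq *ᵥ ((b : ℚ) • c) = 0 := by
        rw [Matrix.mulVec_smul, ← Matrix.mulVecLin_apply, hc, smul_zero]
      rw [hc', hHq] at h2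
      funext v
      have := congrFun h2 v
      simpa using this
    have h3 : c' = 0 := hinj (by rw [h1, Matrix.mulVec_zero])
    have h4 : (b : ℚ) • c = 0 := by rw [hc', h3]; funext x; simp
    exact (smul_eq_zero.1 h4).resolve_left (by exact_mod_cast hb)
  have hrange : LinearMap.range Hq.mulVecLin = LinearMap.ker Nq.mulVecLin := by
    apply le_antisymm
    · rintro _ ⟨c, rfl⟩
      have h0 : Nq * Hq = 0 := by
        have h0' : N * H = 0 := by
          refine Matrix.ext_of_mulVec_single fun i => ?_
          rw [← Matrix.mulVec_mulVec, hker, Matrix.zero_mulVec]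
        have h5 : Nq * Hq = (N * H).map (Int.cast : ℤ → ℚ) := by
          ext i j; simp [Nq, Hq, Matrix.mul_apply]
        rw [h5, h0']; ext; simp
      simp [LinearMap.mem_ker, Matrix.mulVec_mulVec, h0]
    · intro f hf
      rw [LinearMap.mem_ker, Matrix.mulVecLin_apply] at hf
      obtain ⟨b, f', hb, hf'⟩ := exists_int_smul_eq f
      have h1 : N *ᵥ f' = 0 := by
        have h2 : Nq *ᵥ ((b : ℚ) • f) = 0 := by rw [Matrix.mulVec_smul, hf, smul_zero]
        rw [hf', hNq] at h2
        funext v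
        have := congrFun h2 v
        simpa using this
      obtain ⟨c, hc⟩ := hspan f' h1
      refine ⟨(b : ℚ)⁻¹ • fun x => (c x : ℚ), ?_⟩
      have hb' : (b : ℚ) ≠ 0 := by exact_mod_cast hb
      rw [map_smul, Matrix.mulVecLin_apply, hHq, hc, ← hf', smul_smul, inv_mul_cancel₀ hb',
        one_smul]
  have h1 := LinearMap.finrank_range_add_finrank_ker Nq.mulVecLin
  rw [← hrange, LinearMap.finrank_range_of_inj hHinj] at h1
  have h2 : Module.finrank ℚ (LinearMap.range Nq.mulVecLin) = Fintype.card I := hN.rank_matrix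
  simpa [h2] using h1

end Kernel

/-! ### The graph polynomial -/

/-- The squared maximal minor of `H` on `S` is the indicator of the complement of `S` being a
spanning tree. -/
lemma minor_sq {V E B : Type*} [Fintype V] [Fintype E] [Fintype B]
    [DecidableEq V] [DecidableEq E] [DecidableEq B]
    (s t : E → V) (w : V) (N : Matrix {v : V // v ≠ w} E ℤ)
    (hN : ∀ v e, N v e = (if (v : V) = t e then 1 else 0) - (if (v : V) = s e then 1 else 0))
    (H : Matrix E B ℤ)
    (hspan : ∀ f : E → ℤ, N *ᵥ f = 0 → ∃ c : B → ℤ, H *ᵥ c = f)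
    (S : Finset E) (e : B ≃ {x // x ∈ S}) (hS : Sᶜ.card = Fintype.card {v : V // v ≠ w}) :
    (H.submatrix (fun i => (e i : E)) id).det ^ 2 =
      if LinearIndependent ℚ fun x : {x : E // x ∈ Sᶜ} => (fun v => (N v (x : E) : ℚ))
      then 1 else 0 := by
  split_ifs with hT
  · obtain ⟨g⟩ : Nonempty ({v : V // v ≠ w} ≃ {x // x ∈ Sᶜ}) :=
      Fintype.card_eq.1 (by rw [Fintype.card_coe, hS])
    set A := N.submatrix id (fun i => (g i : E)) with hA
    have h1 : A.det ≠ 0 := by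
      have h2 : LinearIndependent ℚ (A.map (Int.cast : ℤ → ℚ)).col :=
        hT.comp g g.injective
      rw [Matrix.linearIndependent_cols_iff_isUnit, Matrix.isUnit_iff_isUnit_det,
        isUnit_iff_ne_zero] at h2
      intro h3
      apply h2
      have h4 := (Int.castRingHom ℚ).map_det A
      rw [h3, map_zero] at h4
      exact h4.symm
    have h5 : A.det ∈ ({0, 1, -1} : Set ℤ) := by
      have h6 := det_incidence' (fun v : {v : V // v ≠ w} => (v : V)) Subtype.val_injective
        (fun v => s (g v)) (fun v => t (g v))
      convert h6 using 2
      ext i j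
      simp [hA, hN]
    have h7 : IsUnit A.det := by
      rcases h5 with h | h | h
      · exact absurd h h1
      · rw [h]; exact isUnit_one
      · rw [h]; exact isUnit_one.neg
    have h8 := isUnit_det_of_unimodular N H hspan S e g h7
    rcases Int.isUnit_iff.1 h8 with h | h <;> rw [h] <;> norm_num
  · rw [det_eq_zero_of_dependent N H hspan S e, zero_pow two_ne_zero]
    intro h
    apply hT
    rw [← LinearIndependent.iff_fractionRing ℤ ℚ]
    have h2 := h.map' ((Int.castAddHom ℚ).toIntLinearMap.compLeft {v : V // v ≠ w}) (by
      rw [LinearMap.ker_eq_bot]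
      intro f f' hff
      funext v
      have := congrFun hff v
      simpa using this)
    exact h2

end DualMatrixTree

/-- Dual Matrix-Tree theorem: `Ψ_G = det(Hᵀ·diag(x)·H) = Σ_{T spanning tree} ∏_{e ∉ T} x_e`,
and in particular `Ψ_G ≠ 0` for a connected graph. -/
theorem dual_matrix_tree
    {V E B : Type*} [Fintype V] [Fintype E] [Fintype B]
    [DecidableEq V] [DecidableEq E] [DecidableEq B] [Nonempty V]
    (s t : E → V) (w : V)
    (ε : Matrix {v : V // v ≠ w} E ℚ)
    (hεdef : ∀ v e, ε v e = (if (v : V) = t e then 1 else 0) - (if (v : V) = s e then 1 else 0))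
    (hconn : LinearIndependent ℚ fun v => ε v)
    (H : Matrix E B ℤ)
    (hHinj : Function.Injective fun c : B → ℤ => H.mulVec c)
    (hHker : ∀ c : B → ℤ, ε.mulVec (fun e => ((H.mulVec c) e : ℚ)) = 0)
    (hHspan : ∀ f : E → ℤ, ε.mulVec (fun e => (f e : ℚ)) = 0 → ∃ c : B → ℤ, H.mulVec c = f) :
    (((H.map (fun n => (MvPolynomial.C n : MvPolynomial E ℤ)))ᵀ *
        Matrix.diagonal (fun e : E => (MvPolynomial.X e : MvPolynomial E ℤ)) *
        H.map (fun n => (MvPolynomial.C n : MvPolynomial E ℤ))).det =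
      ∑ T : Finset E,
        if (T.card = Fintype.card V - 1 ∧
            LinearIndependent ℚ fun e : {e : E // e ∈ T} => (fun v => ε v (e : E))) then
          ∏ e ∈ Tᶜ, (MvPolynomial.X e : MvPolynomial E ℤ)
        else 0) ∧
    ((H.map (fun n => (MvPolynomial.C n : MvPolynomial E ℤ)))ᵀ *
        Matrix.diagonal (fun e : E => (MvPolynomial.X e : MvPolynomial E ℤ)) *
        H.map (fun n => (MvPolynomial.C n : MvPolynomial E ℤ))).det ≠ 0 := by
  set N : Matrix {v : V // v ≠ w} E ℤ := Matrix.of fun v e =>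
    (if (v : V) = t e then 1 else 0) - (if (v : V) = s e then 1 else 0) with hN
  have hNε : ∀ v e, ε v e = (N v e : ℚ) := by
    intro v e
    rw [hεdef, hN, Matrix.of_apply]
    push_cast
    rfl
  have hmv : ∀ f : E → ℤ, ε *ᵥ (fun e => (f e : ℚ)) = 0 ↔ N *ᵥ f = 0 := by
    intro f
    have h : ε *ᵥ (fun e => (f e : ℚ)) = fun v => (((N *ᵥ f) v : ℤ) : ℚ) := by
      funext v
      simp [Matrix.mulVec, dotProduct, hNε]
    rw [h]
    simp [funext_iff]
  have hspan : ∀ f : E → ℤ, N *ᵥ f = 0 → ∃ c : B → ℤ, H *ᵥ c = f :=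
    fun f hf => hHspan f ((hmv f).2 hf)
  have hcardI : Fintype.card {v : V // v ≠ w} = Fintype.card V - 1 := by
    rw [Fintype.card_subtype_compl, Fintype.card_subtype_eq]
  have hcard : Fintype.card {v : V // v ≠ w} + Fintype.card B = Fintype.card E := by
    refine DualMatrixTree.card_add_card N H ?_ hHinj (fun c => (hmv _).1 (hHker c)) hspan
    have h : ε = N.map (Int.cast : ℤ → ℚ) := by ext v e; exact hNε v e
    rw [← h]
    exact hconn
  refine ⟨?_, ?_⟩
  · rw [DualMatrixTree.det_mul_eq_sum_fun, ← Finset.sum_fiberwise _ (fun f : B → E => Finset.univ.image f)]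
    refine Fintype.sum_bijective (fun S : Finset E => Sᶜ) compl_bijective _ _ fun S => ?_
    rw [compl_compl]
    have hSc : S.card + Sᶜ.card = Fintype.card E := Finset.card_add_card_compl S
    by_cases hS : S.card = Fintype.card B
    · have hS' : Sᶜ.card = Fintype.card {v : V // v ≠ w} := by omega
      obtain ⟨e⟩ : Nonempty (B ≃ {x // x ∈ S}) :=
        Fintype.card_eq.1 (by rw [Fintype.card_coe, hS])
      rw [DualMatrixTree.sum_fiber_of_equiv _ _ S e]
      set d := (H.submatrix (fun i => (e i : E)) id).det with hd
      have h1 : ((H.map (fun n => (MvPolynomial.C n : MvPolynomial E ℤ))).submatrix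
          (fun i => (e i : E)) id).det = C d := by
        rw [hd, RingHom.map_det]
        rfl
      have h2 : ((((H.map (fun n => (MvPolynomial.C n : MvPolynomial E ℤ)))ᵀ *
          Matrix.diagonal (fun e : E => (MvPolynomial.X e : MvPolynomial E ℤ)))).submatrix id
          (fun i => (e i : E))).det = (∏ x ∈ S, X x) * C d := by
        rw [← h1, ← Matrix.det_transpose, ← Finset.prod_coe_sort S, ← Equiv.prod_comp e,
          ← Matrix.det_mul_column]
        congr 1
        ext1 i j
        simp [Matrix.mul_diagonal, mul_comm]
      have h3 := DualMatrixTree.minor_sq s t w N (fun _ _ => rfl) H hspan S e hS'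
      have h4 : (LinearIndependent ℚ fun x : {x : E // x ∈ Sᶜ} =>
          (fun v => (N v (x : E) : ℚ))) ↔
          LinearIndependent ℚ fun x : {x : E // x ∈ Sᶜ} => (fun v => ε v (x : E)) := by
        simp only [hNε]
      rw [h1, h2, mul_assoc, ← map_mul, ← pow_two, h3]
      simp only [h4, hS', hcardI, true_and]
      split_ifs <;> simp
    · rw [DualMatrixTree.sum_fiber_of_card_ne _ _ S hS, if_neg]
      rintro ⟨h, -⟩
      omega
  · -- Setting every variable to `1` gives `det (Hᵀ * H)`, which is nonzero as `H` is injective.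
    intro h0
    have h1 := congrArg (MvPolynomial.eval (fun _ : E => (1 : ℤ))) h0
    rw [RingHom.map_det, map_zero] at h1
    have h2 : (MvPolynomial.eval (fun _ : E => (1 : ℤ))).mapMatrix
        ((H.map (fun n => (MvPolynomial.C n : MvPolynomial E ℤ)))ᵀ *
          Matrix.diagonal (fun e : E => (MvPolynomial.X e : MvPolynomial E ℤ)) *
          H.map (fun n => (MvPolynomial.C n : MvPolynomial E ℤ))) = Hᵀ * H := by
      ext i j
      rw [RingHom.mapMatrix_apply, Matrix.map_apply, Matrix.mul_apply, Matrix.mul_apply, map_sum]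
      simp [Matrix.mul_diagonal]
    rw [h2] at h1
    obtain ⟨c, hc, hHc⟩ := Matrix.exists_mulVec_eq_zero_iff.2 h1
    apply hc
    apply hHinj
    have h3 : (H *ᵥ c) ⬝ᵥ (H *ᵥ c) = 0 := by
      rw [Matrix.dotProduct_mulVec, Matrix.vecMul_mulVec, ← Matrix.dotProduct_mulVec, hHc,
        dotProduct_zero]
    simpa using dotProduct_self_eq_zero.1 h3
end

section
/- Let ε be a constant V'×E matrix (entries in ℚ, with linearly independent rows), D an E×E diagonal matrix over A⁰ with invertible diagonal entries, and suppose L = ε·D⁻¹·εᵀ is invertible over A⁰. Then the block matrix M = [[D, −εᵀ], [ε, 0]] is invertible and β^n_M = β^n_D + β^n_L for all n ≥ 1. Moreover β^n_D = 0 for all n ≥ 2 (D being diagonal), hence β^n_M = β^n_L for all n ≥ 2; in particular β^{4k+1}_M = β^{4k+1}_L for all k ≥ 1. -/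
open Matrix

/-!
Write `P = D⁻¹`, `K = L⁻¹`, `B = ε`, `a = P · dD` and `Q = P Bᵀ K B`. The inverse of `M` comes from
the Schur complement `L`, and since `dM` is supported on the block `D`, the trace of `(M⁻¹ dM)ⁿ` is
that of `((1 - Q) a)ⁿ`. As `dL = -B a P Bᵀ`, moving the degree-`0` (hence central) factor `K B`
around the trace gives `β^n_L = (-1)ⁿ tr ((a Q)ⁿ)`.

The decisive point is that `a` is diagonal with entries of odd degree, so `a² = 0`. Therefore
`a (1 - Q) a = -a Q a` and `((1 - Q) a)ⁿ⁺¹ = (-1)ⁿ (1 - Q) (a Q)ⁿ a`. The trace of the part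
involving `Q` is `(-1)ⁿ⁺¹ tr ((a Q)ⁿ⁺¹)`. The trace of `(a Q)ⁿ a` is `tr a` for `n = 0`; for
`n ≥ 1` it is a sum of terms `aₑ r aₑ` with `r` homogeneous, each equal to `± aₑ² r = 0`.
-/

namespace BetaGraph

variable {A : Type*} [Ring A]

/-- The trace is cyclic as soon as the entries of one of the factors are central. -/
lemma trace_mul_comm_of_central {m n : Type*} [Fintype m] [Fintype n]
    (X : Matrix m n A) (Y : Matrix n m A) (hX : ∀ i j, ∀ b : A, X i j * b = b * X i j) :
    trace (X * Y) = trace (Y * X) := by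
  simp only [trace, diag, Matrix.mul_apply]
  rw [Finset.sum_comm]
  exact Finset.sum_congr rfl fun i _ => Finset.sum_congr rfl fun j _ => hX j i _

lemma mul_pow_succ_rect {m n : Type*} [Fintype m] [Fintype n] [DecidableEq m] [DecidableEq n]
    (U : Matrix m n A) (W : Matrix n m A) (k : ℕ) :
    (U * W) ^ (k + 1) = U * ((W * U) ^ k * W) := by
  induction k with
  | zero => simp
  | succ k ih => rw [pow_succ, ih, pow_succ (W * U)]; simp only [Matrix.mul_assoc]

lemma fromBlocks_pow_succ {m n : Type*} [Fintype m] [Fintype n] [DecidableEq m] [DecidableEq n]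
    (X : Matrix m m A) (Y : Matrix n m A) (k : ℕ) :
    (fromBlocks X 0 Y 0) ^ (k + 1) = fromBlocks (X ^ (k + 1)) 0 (Y * X ^ k) (0 : Matrix n n A) := by
  induction k with
  | zero => simp
  | succ k ih =>
    rw [pow_succ, ih, fromBlocks_multiply, pow_succ X (k + 1)]
    simp [Matrix.mul_assoc, pow_succ]

/-- If `a² = 0`, then only the `-q` part of `1 - q` survives between two factors `a`. -/
lemma mul_pow_one_sub {R : Type*} [Ring R] (a q : R) (ha : a * a = 0) (k : ℕ) :
    a * ((1 - q) * a) ^ k = (-1) ^ k * ((a * q) ^ k * a) := by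
  induction k with
  | zero => simp
  | succ k ih =>
    have h : a * ((1 - q) * a) = -(a * q * a) := by
      rw [sub_mul, mul_sub, one_mul, ha, zero_sub, mul_assoc]
    rw [pow_succ, ← mul_assoc, ih, pow_succ (a * q), pow_succ (-1 : R)]
    simp only [mul_assoc] at h ⊢
    rw [h]
    simp

section Graded

variable [Algebra ℚ A] (𝒜 : ℕ → Submodule ℚ A)

lemma mul_mem_entries
    (hgmul : ∀ (m n : ℕ), ∀ a ∈ 𝒜 m, ∀ b ∈ 𝒜 n, a * b ∈ 𝒜 (m + n))
    {l m n : Type*} [Fintype m] {p q : ℕ} (X : Matrix l m A) (Y : Matrix m n A)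
    (hX : ∀ i j, X i j ∈ 𝒜 p) (hY : ∀ i j, Y i j ∈ 𝒜 q) (i : l) (j : n) :
    (X * Y) i j ∈ 𝒜 (p + q) := by
  rw [Matrix.mul_apply]
  exact Submodule.sum_mem _ fun k _ => hgmul _ _ _ (hX _ _) _ (hY _ _)

lemma pow_mem_entries (hone : (1 : A) ∈ 𝒜 0)
    (hgmul : ∀ (m n : ℕ), ∀ a ∈ 𝒜 m, ∀ b ∈ 𝒜 n, a * b ∈ 𝒜 (m + n))
    {m : Type*} [Fintype m] [DecidableEq m] (X : Matrix m m A)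
    (hX : ∀ i j, X i j ∈ 𝒜 1) (k : ℕ) (i j : m) :
    (X ^ k) i j ∈ 𝒜 k := by
  induction k generalizing i j with
  | zero =>
    rw [pow_zero, Matrix.one_apply]
    split_ifs
    · exact hone
    · exact zero_mem _
  | succ k ih =>
    rw [pow_succ]
    exact mul_mem_entries 𝒜 hgmul _ _ ih hX i j

lemma central_of_deg_zero (hdecomp : DirectSum.IsInternal 𝒜)
    (hcomm : ∀ (m n : ℕ), ∀ a ∈ 𝒜 m, ∀ b ∈ 𝒜 n,
      a * b = ((-1 : ℚ) ^ (m * n)) • (b * a))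
    (a : A) (ha : a ∈ 𝒜 0) (b : A) : a * b = b * a := by
  have hb : b ∈ ⨆ i, 𝒜 i := by
    rw [hdecomp.submodule_iSup_eq_top]; trivial
  induction hb using Submodule.iSup_induction' with
  | mem i y hy => simpa using hcomm 0 i a ha y hy
  | zero => simp
  | add y z _ _ h1 h2 => rw [mul_add, add_mul, h1, h2]

lemma sq_zero_of_deg_one
    (hcomm : ∀ (m n : ℕ), ∀ a ∈ 𝒜 m, ∀ b ∈ 𝒜 n,
      a * b = ((-1 : ℚ) ^ (m * n)) • (b * a))
    (a : A) (ha : a ∈ 𝒜 1) : a * a = 0 := by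
  have h := hcomm 1 1 a ha a ha
  have h2 : (2 : ℚ) • (a * a) = 0 := by
    rw [two_smul]
    nth_rewrite 1 [h]
    simp
  exact (smul_eq_zero.mp h2).resolve_left (by norm_num)

/-- `aₑ r aₑ = ± aₑ² r = 0` on the diagonal. -/
lemma trace_diagonal_mul_mul_diagonal
    (hcomm : ∀ (m n : ℕ), ∀ a ∈ 𝒜 m, ∀ b ∈ 𝒜 n,
      a * b = ((-1 : ℚ) ^ (m * n)) • (b * a))
    {m : Type*} [Fintype m] [DecidableEq m] (a : m → A) (ha : ∀ e, a e ∈ 𝒜 1)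
    (R : Matrix m m A) (k : ℕ) (hR : ∀ i j, R i j ∈ 𝒜 k) :
    trace (diagonal a * R * diagonal a) = 0 := by
  simp only [trace, diag, Matrix.mul_diagonal, Matrix.diagonal_mul]
  refine Finset.sum_eq_zero fun e _ => ?_
  rw [mul_assoc, hcomm _ _ _ (hR e e) _ (ha e), mul_smul_comm, ← mul_assoc,
    sq_zero_of_deg_one 𝒜 hcomm _ (ha e), zero_mul, smul_zero]

/-- The trace identity behind the theorem, for a diagonal matrix `a` of degree-one elements and a
matrix `Q` of degree-zero elements. -/
lemma trace_one_sub_mul_pow (hdecomp : DirectSum.IsInternal 𝒜) (hone : (1 : A) ∈ 𝒜 0)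
    (hgmul : ∀ (m n : ℕ), ∀ a ∈ 𝒜 m, ∀ b ∈ 𝒜 n, a * b ∈ 𝒜 (m + n))
    (hcomm : ∀ (m n : ℕ), ∀ a ∈ 𝒜 m, ∀ b ∈ 𝒜 n,
      a * b = ((-1 : ℚ) ^ (m * n)) • (b * a))
    {m : Type*} [Fintype m] [DecidableEq m] (a : m → A) (ha : ∀ e, a e ∈ 𝒜 1)
    (Q : Matrix m m A) (hQ : ∀ i j, Q i j ∈ 𝒜 0) (k : ℕ) :
    trace (((1 - Q) * diagonal a) ^ (k + 1)) =
      trace ((diagonal a) ^ (k + 1)) + (-1) ^ (k + 1) * trace ((diagonal a * Q) ^ (k + 1)) := by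
  have hsq : diagonal a * diagonal a = 0 := by
    rw [diagonal_mul_diagonal]
    simp [sq_zero_of_deg_one 𝒜 hcomm _ (ha _)]
  have hfirst : trace ((-1) ^ k * ((diagonal a * Q) ^ k * diagonal a)) =
      trace ((diagonal a) ^ (k + 1)) := by
    cases k with
    | zero => simp
    | succ k =>
      have hz : (diagonal a) ^ (k + 1 + 1) = 0 := by
        rw [pow_succ, pow_succ, mul_assoc, hsq, mul_zero]
      have ht : trace ((diagonal a * Q) ^ (k + 1) * diagonal a) = 0 := by
        rw [pow_succ', Matrix.mul_assoc (diagonal a) Q]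
        refine trace_diagonal_mul_mul_diagonal 𝒜 hcomm a ha _ (0 + k) ?_
        refine mul_mem_entries 𝒜 hgmul _ _ hQ (pow_mem_entries 𝒜 hone hgmul _ ?_ k)
        intro i j
        rw [diagonal_mul]
        exact hgmul 1 0 _ (ha i) _ (hQ i j)
      rw [hz, trace_zero]
      rcases neg_one_pow_eq_or (Matrix m m A) (k + 1) with h | h <;> rw [h] <;> simp [ht]
  have hsecond : trace (Q * ((diagonal a * Q) ^ k * diagonal a)) =
      trace ((diagonal a * Q) ^ (k + 1)) := by
    rw [trace_mul_comm_of_central Q _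
      fun i j => central_of_deg_zero 𝒜 hdecomp hcomm _ (hQ i j), pow_succ, Matrix.mul_assoc]
  rw [pow_succ', mul_assoc, mul_pow_one_sub _ _ hsq, sub_mul, one_mul, trace_sub, hfirst, ← hsecond,
    sub_eq_add_neg, pow_succ (-1 : A)]
  congr 1
  rcases Nat.even_or_odd k with h | h <;> simp [h.neg_one_pow]

end Graded

end BetaGraph

open BetaGraph in
theorem beta_graph_matrix
    {A : Type*} [Ring A] [Algebra ℚ A]
    (𝒜 : ℕ → Submodule ℚ A)
    (hdecomp : DirectSum.IsInternal 𝒜)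
    (hone : (1 : A) ∈ 𝒜 0)
    (hgmul : ∀ (m n : ℕ), ∀ a ∈ 𝒜 m, ∀ b ∈ 𝒜 n, a * b ∈ 𝒜 (m + n))
    (hcomm : ∀ (m n : ℕ), ∀ a ∈ 𝒜 m, ∀ b ∈ 𝒜 n,
      a * b = ((-1 : ℚ) ^ (m * n)) • (b * a))
    (d : A →ₗ[ℚ] A)
    (hd2 : ∀ a : A, d (d a) = 0)
    (hddeg : ∀ (n : ℕ), ∀ a ∈ 𝒜 n, d a ∈ 𝒜 (n + 1))
    (hleib : ∀ (m : ℕ), ∀ a ∈ 𝒜 m, ∀ b : A,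
      d (a * b) = d a * b + ((-1 : ℚ) ^ m) • (a * d b))
    {E V' : Type*} [Fintype E] [Fintype V'] [DecidableEq E] [DecidableEq V']
    (ε : Matrix V' E ℚ)
    (hε : LinearIndependent ℚ fun v : V' => ε v)
    (x xinv : E → A)
    (hx0 : ∀ e, x e ∈ 𝒜 0) (hxinv0 : ∀ e, xinv e ∈ 𝒜 0)
    (hx : ∀ e, x e * xinv e = 1) (hx' : ∀ e, xinv e * x e = 1)
    (Linv : Matrix V' V' A) (hLinv0 : ∀ i j, Linv i j ∈ 𝒜 0)
    (hLLinv : ((ε.map (fun q : ℚ => algebraMap ℚ A q)) * Matrix.diagonal xinv * (ε.map (fun q : ℚ => algebraMap ℚ A q))ᵀ) * Linv = 1) (hLinvL : Linv * ((ε.map (fun q : ℚ => algebraMap ℚ A q)) * Matrix.diagonal xinv * (ε.map (fun q : ℚ => algebraMap ℚ A q))ᵀ) = 1) :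
    ∃ N : Matrix (E ⊕ V') (E ⊕ V') A,
      (∀ i j, N i j ∈ 𝒜 0) ∧
      (Matrix.fromBlocks (Matrix.diagonal x) (-(ε.map (fun q : ℚ => algebraMap ℚ A q))ᵀ) (ε.map (fun q : ℚ => algebraMap ℚ A q)) (0 : Matrix V' V' A)) * N = 1 ∧ N * (Matrix.fromBlocks (Matrix.diagonal x) (-(ε.map (fun q : ℚ => algebraMap ℚ A q))ᵀ) (ε.map (fun q : ℚ => algebraMap ℚ A q)) (0 : Matrix V' V' A)) = 1 ∧
      (∀ n : ℕ, 1 ≤ n →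
        Matrix.trace ((N * (Matrix.fromBlocks (Matrix.diagonal x) (-(ε.map (fun q : ℚ => algebraMap ℚ A q))ᵀ) (ε.map (fun q : ℚ => algebraMap ℚ A q)) (0 : Matrix V' V' A)).map (fun a => d a)) ^ n) =
          Matrix.trace (((Matrix.diagonal xinv) * (Matrix.diagonal x).map (fun a => d a)) ^ n) + Matrix.trace ((Linv * ((ε.map (fun q : ℚ => algebraMap ℚ A q)) * Matrix.diagonal xinv * (ε.map (fun q : ℚ => algebraMap ℚ A q))ᵀ).map (fun a => d a)) ^ n)) ∧
      (∀ n : ℕ, 2 ≤ n → Matrix.trace (((Matrix.diagonal xinv) * (Matrix.diagonal x).map (fun a => d a)) ^ n) = 0) ∧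
      (∀ n : ℕ, 2 ≤ n →
        Matrix.trace ((N * (Matrix.fromBlocks (Matrix.diagonal x) (-(ε.map (fun q : ℚ => algebraMap ℚ A q))ᵀ) (ε.map (fun q : ℚ => algebraMap ℚ A q)) (0 : Matrix V' V' A)).map (fun a => d a)) ^ n) = Matrix.trace ((Linv * ((ε.map (fun q : ℚ => algebraMap ℚ A q)) * Matrix.diagonal xinv * (ε.map (fun q : ℚ => algebraMap ℚ A q))ᵀ).map (fun a => d a)) ^ n)) ∧
      (∀ k : ℕ, 1 ≤ k →
        Matrix.trace ((N * (Matrix.fromBlocks (Matrix.diagonal x) (-(ε.map (fun q : ℚ => algebraMap ℚ A q))ᵀ) (ε.map (fun q : ℚ => algebraMap ℚ A q)) (0 : Matrix V' V' A)).map (fun a => d a)) ^ (4 * k + 1)) = Matrix.trace ((Linv * ((ε.map (fun q : ℚ => algebraMap ℚ A q)) * Matrix.diagonal xinv * (ε.map (fun q : ℚ => algebraMap ℚ A q))ᵀ).map (fun a => d a)) ^ (4 * k + 1))) := by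
  have hcen := central_of_deg_zero 𝒜 hdecomp hcomm
  have hd1 : d 1 = 0 := by
    have h := hleib 0 1 hone 1
    simpa using h
  have hda : ∀ q : ℚ, d (algebraMap ℚ A q) = 0 := fun q => by
    rw [Algebra.algebraMap_eq_smul_one, map_smul, hd1, smul_zero]
  have ha0 : ∀ q : ℚ, algebraMap ℚ A q ∈ 𝒜 0 := fun q => by
    rw [Algebra.algebraMap_eq_smul_one]; exact Submodule.smul_mem _ _ hone
  obtain ⟨B, hB⟩ : ∃ B : Matrix V' E A, B = ε.map (fun q : ℚ => algebraMap ℚ A q) := ⟨_, rfl⟩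
  have hB0 : ∀ i j, B i j ∈ 𝒜 0 := fun i j => by rw [hB]; exact ha0 _
  have hBt0 : ∀ i j, Bᵀ i j ∈ 𝒜 0 := fun i j => hB0 j i
  have hdB : B.map (fun a => d a) = 0 := by
    ext i j; simp [hB, hda]
  have hdBX : ∀ X : Matrix E E A, (B * X * Bᵀ).map (fun a => d a) =
      B * X.map (fun a => d a) * Bᵀ := fun X => by
    ext i j
    simp only [hB, Matrix.mul_apply, Matrix.map_apply, Matrix.transpose_apply, map_sum]
    refine Finset.sum_congr rfl fun e _ => ?_
    simp only [← Algebra.commutes, ← Algebra.smul_def, map_smul, map_sum]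
  rw [← hB] at hLLinv hLinvL ⊢
  -- Differentiating `xₑ xₑ⁻¹ = 1`.
  have hdxinv : ∀ e, d (xinv e) = -(xinv e * d (x e) * xinv e) := fun e => by
    have h := hleib 0 (x e) (hx0 e) (xinv e)
    rw [hx, hd1, pow_zero, one_smul] at h
    have h2 : x e * d (xinv e) = -(d (x e) * xinv e) := (neg_eq_of_add_eq_zero_right h.symm).symm
    calc d (xinv e) = xinv e * x e * d (xinv e) := by rw [hx', one_mul]
      _ = _ := by rw [mul_assoc, h2, mul_neg, mul_assoc]
  have hP0 : ∀ i j, diagonal xinv i j ∈ 𝒜 0 := fun i j => by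
    rw [diagonal_apply]; split_ifs
    · exact hxinv0 i
    · exact zero_mem _
  have hDP : diagonal x * diagonal xinv = 1 := by
    rw [diagonal_mul_diagonal]; simp [hx]
  have hPD : diagonal xinv * diagonal x = 1 := by
    rw [diagonal_mul_diagonal]; simp [hx']
  have hdD : (diagonal x).map (fun a => d a) = diagonal fun e => d (x e) := by
    rw [diagonal_map (map_zero d)]
  have hdP : (diagonal xinv).map (fun a => d a) =
      -(diagonal xinv * (diagonal x).map (fun a => d a) * diagonal xinv) := by
    rw [hdD, diagonal_map (map_zero d), diagonal_mul_diagonal, diagonal_mul_diagonal, diagonal_neg]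
    congr 1
    funext e
    exact hdxinv e
  have hdL := hdBX (diagonal xinv)
  rw [hdP] at hdL
  obtain ⟨a, ha⟩ : ∃ a : E → A, a = fun e => xinv e * d (x e) := ⟨_, rfl⟩
  have haD : diagonal xinv * (diagonal x).map (fun a => d a) = diagonal a := by
    rw [hdD, diagonal_mul_diagonal, ha]
  have ha1 : ∀ e, a e ∈ 𝒜 1 := fun e => by
    have := hgmul 0 1 _ (hxinv0 e) _ (hddeg 0 _ (hx0 e))
    rw [ha]; simpa using this
  rw [haD] at hdL
  obtain ⟨P, hP⟩ : ∃ P : Matrix E E A, P = diagonal xinv := ⟨_, rfl⟩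
  obtain ⟨D, hD⟩ : ∃ D : Matrix E E A, D = diagonal x := ⟨_, rfl⟩
  rw [← hP] at hLLinv hLinvL hP0 hDP hPD haD hdL ⊢
  rw [← hD] at hDP hPD haD ⊢
  have hKB0 := mul_mem_entries 𝒜 hgmul Linv B hLinv0 hB0
  have hPB0 := mul_mem_entries 𝒜 hgmul P Bᵀ hP0 hBt0
  have hQ0 := mul_mem_entries 𝒜 hgmul _ _ hPB0 hKB0
  have hQP0 := mul_mem_entries 𝒜 hgmul _ _ hQ0 hP0
  have hKBP0 := mul_mem_entries 𝒜 hgmul _ _ hKB0 hP0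
  have hPBK0 := mul_mem_entries 𝒜 hgmul _ _ hPB0 hLinv0
  have hDnil : ∀ n : ℕ, 2 ≤ n → trace ((diagonal a) ^ n) = 0 := fun n hn => by
    obtain ⟨k, rfl⟩ := Nat.exists_eq_add_of_le hn
    rw [pow_add, pow_two, diagonal_mul_diagonal]
    simp [sq_zero_of_deg_one 𝒜 hcomm _ (ha1 _)]
  have hBPBK : B * (P * (Bᵀ * Linv)) = 1 := by simpa only [Matrix.mul_assoc] using hLLinv
  have hKBPB : Linv * (B * (P * Bᵀ)) = 1 := by simpa only [Matrix.mul_assoc] using hLinvL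
  have hBPBKX : ∀ X : Matrix V' E A, B * (P * (Bᵀ * (Linv * X))) = X := fun X => by
    have := congrArg (· * X) hBPBK
    simpa only [Matrix.mul_assoc, Matrix.one_mul] using this
  have hDPE : ∀ X : Matrix E E A, D * (P * X) = X := fun X => by
    rw [← Matrix.mul_assoc, hDP, Matrix.one_mul]
  have hDPV : ∀ X : Matrix E V' A, D * (P * X) = X := fun X => by
    rw [← Matrix.mul_assoc, hDP, Matrix.one_mul]
  have hmain : ∀ n : ℕ, 1 ≤ n →
      trace ((fromBlocks (P - P * Bᵀ * (Linv * B) * P) (P * Bᵀ * Linv) (-(Linv * B * P)) Linv *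
        (fromBlocks D (-Bᵀ) B (0 : Matrix V' V' A)).map (fun a => d a)) ^ n) =
      trace ((P * D.map (fun a => d a)) ^ n) +
        trace ((Linv * (B * P * Bᵀ).map (fun a => d a)) ^ n) := by
    intro n hn
    obtain ⟨k, rfl⟩ := Nat.exists_eq_add_of_le' hn
    have hdM : (fromBlocks D (-Bᵀ) B (0 : Matrix V' V' A)).map (fun a => d a) =
        fromBlocks (D.map (fun a => d a)) 0 0 0 := by
      have h1 : (-Bᵀ).map (fun a => d a) = 0 := by
        ext i j
        have := congrFun (congrFun hdB j) i
        simpa using this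
      have h2 : (0 : Matrix V' V' A).map (fun a => d a) = 0 := by
        ext i j; simp
      rw [fromBlocks_map, hdB, h1, h2]
    have hX : (P - P * Bᵀ * (Linv * B) * P) * D.map (fun a => d a) =
        (1 - P * Bᵀ * (Linv * B)) * diagonal a := by
      rw [← haD, Matrix.sub_mul, Matrix.sub_mul, Matrix.one_mul, ← Matrix.mul_assoc]
      simp only [Matrix.mul_assoc]
    have hKdL : Linv * (B * P * Bᵀ).map (fun a => d a) =
        -((Linv * B) * (diagonal a * (P * Bᵀ))) := by
      rw [hdL]; simp only [Matrix.mul_assoc, Matrix.mul_neg, Matrix.neg_mul]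
    -- `tr ((K dL)ⁿ)` is `(-1)ⁿ` times this trace; the central factor `K B` moves to the end.
    have hcyc : trace (((Linv * B) * (diagonal a * (P * Bᵀ))) ^ (k + 1)) =
        trace ((diagonal a * (P * Bᵀ * (Linv * B))) ^ (k + 1)) := by
      rw [mul_pow_succ_rect, trace_mul_comm_of_central _ _ fun i j => hcen _ (hKB0 i j), pow_succ]
      simp only [Matrix.mul_assoc]
    have hblk : fromBlocks (P - P * Bᵀ * (Linv * B) * P) (P * Bᵀ * Linv) (-(Linv * B * P)) Linv *
        fromBlocks (D.map (fun a => d a)) 0 0 0 =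
        fromBlocks ((1 - P * Bᵀ * (Linv * B)) * diagonal a) 0
          (-(Linv * B * P) * D.map (fun a => d a)) (0 : Matrix V' V' A) := by
      rw [fromBlocks_multiply, hX]; simp
    have hblock : ∀ (X : Matrix E E A) (Y : Matrix V' E A),
        trace (fromBlocks X 0 Y (0 : Matrix V' V' A)) = trace X + trace (0 : Matrix V' V' A) :=
      fun X Y => by simp [trace]
    rw [hdM, hblk, fromBlocks_pow_succ, hblock, trace_zero, add_zero,
      trace_one_sub_mul_pow 𝒜 hdecomp hone hgmul hcomm a ha1 _ hQ0, haD, hKdL, ← hcyc]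
    congr 1
    rcases Nat.even_or_odd (k + 1) with h | h <;> rw [h.neg_one_pow, h.neg_pow] <;> simp
  have hmain2 : ∀ n : ℕ, 2 ≤ n → _ := fun n hn => by
    have h := hmain n (by omega)
    rw [haD, hDnil n hn, zero_add] at h
    exact h
  refine ⟨fromBlocks (P - P * Bᵀ * (Linv * B) * P) (P * Bᵀ * Linv) (-(Linv * B * P)) Linv,
    ?_, ?_, ?_, hmain, fun n hn => ?_, hmain2, fun k hk => hmain2 _ (by omega)⟩
  · rintro (i | i) (j | j)
    · exact Submodule.sub_mem _ (hP0 i j) (hQP0 i j)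
    · exact hPBK0 i j
    · exact Submodule.neg_mem _ (hKBP0 i j)
    · exact hLinv0 i j
  · rw [fromBlocks_multiply, ← fromBlocks_one]
    congr 1 <;>
      simp [Matrix.mul_sub, Matrix.mul_assoc, hDP, hDPE, hDPV, hBPBK, hBPBKX]
  · rw [fromBlocks_multiply, ← fromBlocks_one]
    congr 1 <;>
      simp [Matrix.sub_mul, Matrix.mul_assoc, hPD, hKBPB]
  · rw [haD]; exact hDnil n hn
end

section
/- The canonical integral of the degree-5 canonical form over the wheel with three spokes equals 60·ζ(3): the function (x₁,…,x₅) ↦ 10/Ψ(x₁,…,x₅,1)² is integrable on (0,∞)⁵ with respect to Lebesgue measure and ∫_{(0,∞)⁵} 10/Ψ(x₁,x₂,x₃,x₄,x₅,1)² dx₁…dx₅ = 60·ζ(3), where ζ(3) = Σ_{n≥1} 1/n³. -/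
/-!
Every integrand below is nonnegative up to the final step, so the whole computation is done with
the Lebesgue integral `∫⁻`, where Tonelli and monotone convergence need no integrability.
Write `a = x₂`, `b = x₃`, `c = x₅` and `x₆ = 1`. It suffices to prove `∫ 1/Ψ² = 6 ζ(3)`.

* `Ψ` is affine in each of `x₁`, `x₄`, and its coefficients satisfy the Dodgson identity
  `A₀ B₁ - A₁ B₀ = (a c - b)²`, where `Ψ = (A₁ x₄ + A₀) x₁ + (B₁ x₄ + B₀)`. Integrating out
  `x₁` and `x₄` therefore gives `logKernel a b c = log (A₀ B₁ / (A₁ B₀)) / (a c - b)²`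
  (`lintegral_x1_x4`).
* Along the ray `a = b p`, rescaling `b` factors `A₀ B₁ / (A₁ B₀)` as
  `(1 + r x) (1 + r y) / ((1 + r) (1 + r x y))` with `x = p (1 + c) / (1 + p)` and
  `y = (1 + c) / (c (1 + p))`. Integrating its logarithm against `dr / r` gives
  `log x * (-log y)` (`lintegral_log_cross`), so two variables `c`, `p` remain, with integrand
  `twoLogKernel c p` (`lintegral_a_b`).
* The inversion `(c, p) ↦ (1/c, 1/p)` exchanges `p c < 1` and `p c > 1`, and two Möbius
  substitutions turn the region `p c < 1` into the unit square, leaving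
  `∫∫ log x log z / ((1 - x z) (1 - x) (1 - z))` (`lintegral_twoLogKernel_eq_unit_square`).
* Three geometric series turn this into `∑ 1 / ((i + j + 1)² (i + k + 1)²)`. Splitting by
  `j = k`, `j < k`, `j > k` gives `ζ(3) + 2 ζ(2,1)`, which is `3 ζ(3)` by Euler's identity
  `ζ(2,1) = ζ(3)` (`Z21_eq_Z3`, `tsum_triple`).

Altogether `∫ 1/Ψ² = 2 * 3 ζ(3)`.
-/

open MeasureTheory

/-- The Kirchhoff polynomial of the wheel with three spokes `W₃`. -/
noncomputable def PsiW3 (x1 x2 x3 x4 x5 x6 : ℝ) : ℝ :=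
  x1*x2*x3 + x1*x2*x4 + x1*x2*x5 + x1*x3*x4 + x1*x3*x6 + x1*x4*x5 + x1*x4*x6 + x1*x5*x6
    + x2*x3*x5 + x2*x3*x6 + x2*x4*x5 + x2*x4*x6 + x2*x5*x6 + x3*x4*x5 + x3*x4*x6 + x3*x5*x6

section

open Set Filter Topology

/-! ### One-variable integrals -/

/-- Change of variables for an injective differentiable `g` from `s` onto `t`, with bijectivity
witnessed by an explicit inverse `h`. -/
theorem lintegral_subst {s t : Set ℝ} {g g' h : ℝ → ℝ} (f : ℝ → ENNReal) (hs : MeasurableSet s)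
    (hder : ∀ x ∈ s, HasDerivAt g (g' x) x) (hmap : ∀ x ∈ s, g x ∈ t)
    (hinv : ∀ y ∈ t, h y ∈ s ∧ g (h y) = y) (hleft : ∀ x ∈ s, h (g x) = x) :
    ∫⁻ y in t, f y = ∫⁻ x in s, ENNReal.ofReal |g' x| * f (g x) := by
  have himg : t = g '' s := by
    ext y
    constructor
    · intro hy
      exact ⟨h y, (hinv y hy).1, (hinv y hy).2⟩
    · rintro ⟨x, hx, rfl⟩
      exact hmap x hx
  rw [himg]
  exact lintegral_image_eq_lintegral_abs_deriv_mul hs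
    (fun x hx => (hder x hx).hasDerivWithinAt) (LeftInvOn.injOn hleft) f

theorem lintegral_scale (f : ℝ → ENNReal) {k : ℝ} (hk : 0 < k) :
    ∫⁻ y in Ioi (0 : ℝ), f y = ∫⁻ x in Ioi (0 : ℝ), ENNReal.ofReal k * f (k * x) := by
  have := lintegral_subst (s := Ioi 0) (t := Ioi 0) (g := fun x => k * x) (g' := fun _ => k)
    (h := fun y => y / k) f measurableSet_Ioi
    (fun x _ => by simpa using (hasDerivAt_id x).const_mul k)
    (fun x (hx : 0 < x) => show 0 < k * x by positivity)
    (fun y (hy : 0 < y) => ⟨show 0 < y / k by positivity, by field_simp⟩)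
    (fun x _ => by field_simp)
  rw [this, abs_of_pos hk]

theorem lintegral_inv (f : ℝ → ENNReal) :
    ∫⁻ y in Ioi (0 : ℝ), f y = ∫⁻ x in Ioi (0 : ℝ), ENNReal.ofReal (1 / x ^ 2) * f (1 / x) := by
  have := lintegral_subst (s := Ioi 0) (t := Ioi 0) (g := fun x => 1 / x)
    (g' := fun x => - (x ^ 2)⁻¹)
    (h := fun y => 1 / y) f measurableSet_Ioi
    (fun x (hx : 0 < x) => by simpa using hasDerivAt_inv hx.ne')
    (fun x (hx : 0 < x) => show 0 < 1 / x by positivity)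
    (fun y (hy : 0 < y) => ⟨show 0 < 1 / y by positivity, by field_simp⟩)
    (fun x _ => by field_simp)
  rw [this]
  refine setLIntegral_congr_fun measurableSet_Ioi (fun x hx => ?_)
  simp

theorem lintegral_Ioi_deriv {g g' : ℝ → ℝ} {l : ℝ}
    (hder : ∀ x ∈ Ici (0 : ℝ), HasDerivAt g (g' x) x) (hpos : ∀ x ∈ Ioi (0 : ℝ), 0 ≤ g' x)
    (hl : Tendsto g atTop (𝓝 l)) :
    ∫⁻ x in Ioi (0 : ℝ), ENNReal.ofReal (g' x) = ENNReal.ofReal (l - g 0) := by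
  rw [← integral_Ioi_of_hasDerivAt_of_nonneg' hder hpos hl,
    ofReal_integral_eq_lintegral_ofReal (integrableOn_Ioi_deriv_of_nonneg' hder hpos hl)]
  exact (ae_restrict_iff' measurableSet_Ioi).2 (ae_of_all _ hpos)

theorem lintegral_Ioo_deriv {g g' : ℝ → ℝ} {a b : ℝ} (hab : a ≤ b)
    (hc : ContinuousOn g (Icc a b))
    (hder : ∀ x ∈ Ioo a b, HasDerivAt g (g' x) x) (hpos : ∀ x ∈ Ioo a b, 0 ≤ g' x) :
    ∫⁻ x in Ioo a b, ENNReal.ofReal (g' x) = ENNReal.ofReal (g b - g a) := by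
  have hi := intervalIntegral.integrableOn_deriv_of_nonneg hc hder hpos
  rw [← intervalIntegral.integral_eq_sub_of_hasDerivAt_of_le hab hc hder
    ((intervalIntegrable_iff_integrableOn_Ioc_of_le hab).2 hi),
    intervalIntegral.integral_of_le hab, integral_Ioc_eq_integral_Ioo,
    ofReal_integral_eq_lintegral_ofReal (hi.mono_set Ioo_subset_Ioc_self)]
  exact (ae_restrict_iff' measurableSet_Ioo).2 (ae_of_all _ hpos)

theorem lintegral_inv_sq {A B : ℝ} (hA : 0 < A) (hB : 0 < B) :
    ∫⁻ x in Ioi (0 : ℝ), ENNReal.ofReal (1 / (A * x + B) ^ 2) = ENNReal.ofReal (1 / (A * B)) := by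
  rw [lintegral_Ioi_deriv (g := fun x => - (1 / A) * (A * x + B)⁻¹) (l := 0)]
  · congr 1; field_simp; simp
  · intro x (hx : 0 ≤ x)
    have h : A * x + B ≠ 0 := by positivity
    have := ((((hasDerivAt_id x).const_mul A).add_const B).inv h).const_mul (- (1 / A))
    refine this.congr_deriv ?_
    simp only [id]
    field_simp
  · intro x hx; positivity
  · rw [show (0 : ℝ) = - (1 / A) * 0 by simp]
    refine Tendsto.const_mul _ (tendsto_inv_atTop_zero.comp ?_)
    exact tendsto_atTop_add_const_right _ _ (tendsto_id.const_mul_atTop hA)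

/-- Partial fractions: the integrand is the derivative of
`(log (B₁ x + B₀) - log (A₁ x + A₀)) / (A₀ B₁ - A₁ B₀)`. -/
theorem lintegral_inv_mul {A₁ A₀ B₁ B₀ : ℝ} (hA₁ : 0 < A₁) (hA₀ : 0 < A₀) (hB₁ : 0 < B₁)
    (hB₀ : 0 < B₀) (h : A₁ * B₀ < A₀ * B₁) :
    ∫⁻ x in Ioi (0 : ℝ), ENNReal.ofReal (1 / ((A₁ * x + A₀) * (B₁ * x + B₀))) =
      ENNReal.ofReal (Real.log (A₀ * B₁ / (A₁ * B₀)) / (A₀ * B₁ - A₁ * B₀)) := by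
  have hΔ : 0 < A₀ * B₁ - A₁ * B₀ := sub_pos.2 h
  have hd (C₁ C₀ x : ℝ) (h1 : 0 < C₁) (h0 : 0 < C₀) (hx : 0 ≤ x) :
      HasDerivAt (fun x => Real.log (C₁ * x + C₀)) (C₁ / (C₁ * x + C₀)) x := by
    have h : C₁ * x + C₀ ≠ 0 := by positivity
    have := (((hasDerivAt_id x).const_mul C₁).add_const C₀).log h
    simpa using this
  rw [lintegral_Ioi_deriv
    (g := fun x => (Real.log (B₁ * x + B₀) - Real.log (A₁ * x + A₀)) / (A₀ * B₁ - A₁ * B₀))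
    (l := (Real.log (B₁ / A₁)) / (A₀ * B₁ - A₁ * B₀))]
  · congr 1
    rw [← sub_div]
    congr 1
    simp only [mul_zero, zero_add]
    rw [Real.log_div (by positivity) (by positivity), Real.log_div (by positivity) (by positivity),
      Real.log_mul (by positivity) (by positivity), Real.log_mul (by positivity) (by positivity)]
    ring
  · intro x (hx : 0 ≤ x)
    refine (((hd B₁ B₀ x hB₁ hB₀ hx).sub (hd A₁ A₀ x hA₁ hA₀ hx)).div_const
      (A₀ * B₁ - A₁ * B₀)).congr_deriv ?_
    have h1 : A₁ * x + A₀ ≠ 0 := by positivity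
    have h2 : B₁ * x + B₀ ≠ 0 := by positivity
    have := hΔ.ne'
    rw [div_sub_div _ _ h2 h1, div_div, div_eq_div_iff (by positivity) (by positivity)]
    ring
  · intro x (hx : 0 < x); positivity
  · refine Tendsto.div_const ?_ _
    have hlim : Tendsto (fun x : ℝ => (B₁ * x + B₀) / (A₁ * x + A₀)) atTop (𝓝 (B₁ / A₁)) := by
      have h1 : Tendsto (fun x : ℝ => (B₁ + B₀ * x⁻¹) / (A₁ + A₀ * x⁻¹)) atTop
          (𝓝 ((B₁ + B₀ * 0) / (A₁ + A₀ * 0))) :=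
        ((tendsto_inv_atTop_zero.const_mul B₀).const_add B₁).div
          ((tendsto_inv_atTop_zero.const_mul A₀).const_add A₁) (by simpa using hA₁.ne')
      simp only [mul_zero, add_zero] at h1
      refine h1.congr' ?_
      filter_upwards [eventually_gt_atTop 0] with x hx
      field_simp
    refine (hlim.log (by positivity)).congr' ?_
    filter_upwards [eventually_gt_atTop 0] with x hx
    rw [Real.log_div (by positivity) (by positivity)]

/-- The integrand is the integral over `t` from `1` to `x` of
`(1 - y) / ((1 + t r) (1 + t r y))`; exchanging the order, the `r`-integral of this equals
`-log y / t`. -/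
theorem lintegral_log_cross {x y : ℝ} (hx : 1 < x) (hy : 0 < y) (hy1 : y < 1) :
    ∫⁻ r in Ioi (0 : ℝ), ENNReal.ofReal
      (Real.log ((1 + r * x) * (1 + r * y) / ((1 + r) * (1 + r * (x * y)))) / r) =
      ENNReal.ofReal (Real.log x * (- Real.log y)) := by
  have h1 : ∀ r ∈ Ioi (0 : ℝ), ENNReal.ofReal
      (Real.log ((1 + r * x) * (1 + r * y) / ((1 + r) * (1 + r * (x * y)))) / r) =
      ∫⁻ t in Ioo 1 x, ENNReal.ofReal ((1 - y) * (1 / ((y * t * r + 1) * (t * r + 1)))) := by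
    intro r (hr : 0 < r)
    have hd (k t : ℝ) (hk : 0 < k) (ht : 0 < t) :
        HasDerivAt (fun t => Real.log (1 + k * t)) (k / (1 + k * t)) t := by
      have h : 1 + k * t ≠ 0 := by positivity
      have := (((hasDerivAt_id t).const_mul k).const_add 1).log h
      simpa using this
    have hD (t : ℝ) (ht : 0 < t) :
        HasDerivAt (fun t => (Real.log (1 + r * t) - Real.log (1 + r * y * t)) / r)
        ((1 - y) * (1 / ((y * t * r + 1) * (t * r + 1)))) t := by
      refine (((hd r t hr ht).sub (hd (r * y) t (by positivity) ht)).div_const r).congr_deriv ?_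
      have h1 : y * t * r + 1 ≠ 0 := by positivity
      have h2 : t * r + 1 ≠ 0 := by positivity
      have h3 : 1 + r * t ≠ 0 := by positivity
      have h4 : 1 + r * y * t ≠ 0 := by positivity
      field_simp
      ring
    rw [lintegral_Ioo_deriv (g := fun t => (Real.log (1 + r * t) - Real.log (1 + r * y * t)) / r)
      hx.le]
    · congr 1
      rw [Real.log_div (by positivity) (by positivity), Real.log_mul (by positivity)
        (by positivity), Real.log_mul (by positivity) (by positivity)]
      ring_nf
    · intro t ht
      exact (hD t (by linarith [ht.1])).continuousAt.continuousWithinAt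
    · intro t ht
      exact hD t (by linarith [ht.1])
    · intro t ht
      have : 0 < t := by linarith [ht.1]
      have : 0 < 1 - y := by linarith
      positivity
  rw [setLIntegral_congr_fun measurableSet_Ioi h1, lintegral_lintegral_swap]
  · have h2 : ∀ t ∈ Ioo 1 x, ∫⁻ r in Ioi (0 : ℝ),
        ENNReal.ofReal ((1 - y) * (1 / ((y * t * r + 1) * (t * r + 1)))) =
        ENNReal.ofReal (- Real.log y) * ENNReal.ofReal (1 / t) := by
      intro t ht
      have ht0 : 0 < t := by linarith [ht.1]
      have hy0 : 0 < 1 - y := by linarith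
      simp_rw [ENNReal.ofReal_mul hy0.le]
      rw [lintegral_const_mul _ (by fun_prop),
        lintegral_inv_mul (by positivity) one_pos ht0 one_pos (by nlinarith),
        ← ENNReal.ofReal_mul hy0.le, ← ENNReal.ofReal_mul (by
          have := Real.log_neg hy hy1; linarith)]
      congr 1
      rw [show 1 * t / (y * t * 1) = y⁻¹ by field_simp, Real.log_inv]
      have : 1 * t - y * t * 1 ≠ 0 := by nlinarith
      field_simp
    rw [setLIntegral_congr_fun measurableSet_Ioo h2, lintegral_const_mul _ (by fun_prop),
      lintegral_Ioo_deriv (g := Real.log) hx.le, Real.log_one, sub_zero,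
      ← ENNReal.ofReal_mul (by have := Real.log_neg hy hy1; linarith), mul_comm]
    · intro t ht
      exact (Real.continuousAt_log (by linarith [ht.1])).continuousWithinAt
    · intro t ht
      simpa using Real.hasDerivAt_log (by linarith [ht.1])
    · intro t ht
      have : 0 < t := by linarith [ht.1]
      positivity
  · exact Measurable.aemeasurable (by unfold Function.uncurry; fun_prop)


/-! ### Reduction from five variables to two -/

/-- The result of integrating `1 / Ψ²` over `x₁` and `x₄`, as a function of `a = x₂`, `b = x₃`,
`c = x₅` (with `x₆ = 1`). On the surface `a c = b` both the logarithm and the denominator vanish,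
and the convention `0 / 0 = 0` applies; this surface is negligible. -/
noncomputable def logKernel (a b c : ℝ) : ℝ :=
  Real.log ((a + 1) * (b + c) * ((a + b) * (c + 1)) /
    ((a + b + c + 1) * (a * b * c + a * b + a * c + b * c))) / (a * c - b) ^ 2

theorem lintegral_x1_x4 {a b c : ℝ} (ha : 0 < a) (hb : 0 < b) (hc : 0 < c) (h : a * c ≠ b) :
    ∫⁻ x4 in Ioi (0 : ℝ), ∫⁻ x1 in Ioi (0 : ℝ), ENNReal.ofReal (1 / PsiW3 x1 a b x4 c 1 ^ 2) =
      ENNReal.ofReal (logKernel a b c) := by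
  have h1 : ∀ x4 ∈ Ioi (0 : ℝ),
      ∫⁻ x1 in Ioi (0 : ℝ), ENNReal.ofReal (1 / PsiW3 x1 a b x4 c 1 ^ 2) =
      ENNReal.ofReal (1 / (((a + b + c + 1) * x4 + (a + 1) * (b + c)) *
        ((a + b) * (c + 1) * x4 + (a * b * c + a * b + a * c + b * c)))) := by
    intro x4 (hx4 : 0 < x4)
    rw [← lintegral_inv_sq (by positivity) (by positivity)]
    refine lintegral_congr fun x1 => ?_
    congr 3
    unfold PsiW3
    ring
  -- Dodgson identity between the coefficients of `Ψ` in `x₁` and `x₄`.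
  have hD : (a + 1) * (b + c) * ((a + b) * (c + 1)) -
      (a + b + c + 1) * (a * b * c + a * b + a * c + b * c) = (a * c - b) ^ 2 := by ring
  have hD0 : 0 < (a * c - b) ^ 2 := by
    have : a * c - b ≠ 0 := sub_ne_zero.2 h
    positivity
  rw [setLIntegral_congr_fun measurableSet_Ioi h1,
    lintegral_inv_mul (by positivity) (by positivity) (by positivity) (by positivity)
      (by linarith), hD]
  rfl

@[fun_prop]
theorem measurable_logKernel : Measurable fun t : ℝ × ℝ × ℝ => logKernel t.1 t.2.1 t.2.2 := by
  unfold logKernel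
  fun_prop

/-- The integrand in `c = x₅` and `p = x₂ / x₃` left after integrating `logKernel` along rays:
`log x * log y⁻¹ / (p c - 1)²` with `x = p (1 + c) / (1 + p)` and `y = (1 + c) / (c (1 + p))`.
Its value where `p c = 1` is `0` by the convention for division by zero. -/
noncomputable def twoLogKernel (c p : ℝ) : ℝ :=
  Real.log (p * (1 + c) / (1 + p)) * Real.log (c * (1 + p) / (1 + c)) / (p * c - 1) ^ 2

@[fun_prop]
theorem measurable_twoLogKernel : Measurable fun t : ℝ × ℝ => twoLogKernel t.1 t.2 := by
  unfold twoLogKernel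
  fun_prop

/-- Integration of `logKernel` along the ray `a = b p`, with the Jacobian `b`. Rescaling `b` by
`(1 + c) / (1 + p)` brings the argument of the logarithm to the form of `lintegral_log_cross`. -/
theorem lintegral_scale_logKernel {c p : ℝ} (hc : 0 < c) (hp : 0 < p) :
    ∫⁻ b in Ioi (0 : ℝ), ENNReal.ofReal b * ENNReal.ofReal (logKernel (b * p) b c) =
      ENNReal.ofReal (twoLogKernel c p) := by
  by_cases hpc : p * c = 1
  · have : ∀ b, logKernel (b * p) b c = 0 := fun b => by
      rw [logKernel, show b * p * c - b = b * (p * c - 1) by ring, hpc]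
      simp
    simp [this, twoLogKernel, hpc]
  have hpc' : p * c - 1 ≠ 0 := sub_ne_zero.2 hpc
  have hk : 0 < (1 + c) / (1 + p) := by positivity
  set x := p * (1 + c) / (1 + p) with hx
  set y := (1 + c) / (c * (1 + p)) with hy
  have hlogy : Real.log (c * (1 + p) / (1 + c)) = - Real.log y := by
    rw [hy, ← Real.log_inv, inv_div]
  have h1 : ∀ r ∈ Ioi (0 : ℝ), ENNReal.ofReal ((1 + c) / (1 + p)) *
      (ENNReal.ofReal ((1 + c) / (1 + p) * r) *
        ENNReal.ofReal (logKernel ((1 + c) / (1 + p) * r * p) ((1 + c) / (1 + p) * r) c)) =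
      ENNReal.ofReal (1 / (p * c - 1) ^ 2) * ENNReal.ofReal
      (Real.log ((1 + r * x) * (1 + r * y) / ((1 + r) * (1 + r * (x * y)))) / r) := by
    intro r (hr : 0 < r)
    rw [← ENNReal.ofReal_mul (by positivity), ← ENNReal.ofReal_mul (by positivity),
      ← ENNReal.ofReal_mul (by positivity)]
    congr 1
    -- Stated for a variable `k` so that the scale factor is expanded only where it is needed.
    have harg : ∀ k, k = (1 + c) / (1 + p) →
        (k * r * p + 1) * (k * r + c) * ((k * r * p + k * r) * (c + 1)) /
        ((k * r * p + k * r + c + 1) *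
          (k * r * p * (k * r) * c + k * r * p * (k * r) + k * r * p * c + k * r * c)) =
        (1 + r * x) * (1 + r * y) / ((1 + r) * (1 + r * (x * y))) := by
      intro k hk'
      have hk0 : 0 < k := hk' ▸ hk
      have e1 : k * r * p + 1 = 1 + r * x := by rw [hk', hx]; field_simp; ring
      have e2 : k * r + c = c * (1 + r * y) := by rw [hk', hy]; field_simp; ring
      have e3 : k * r * p + k * r = r * (1 + c) := by rw [hk']; field_simp; ring
      have e4 : k * r * p + k * r + c + 1 = (1 + c) * (1 + r) := by
        rw [add_assoc, e3]; ring
      have e5 : k * r * p * (k * r) * c + k * r * p * (k * r) + k * r * p * c + k * r * c =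
          r * (1 + c) * c * (1 + r * (x * y)) := by
        rw [hk', hx, hy]; field_simp; ring
      have hx0 : 0 < x := by positivity
      have hy0 : 0 < y := by positivity
      rw [e1, e2, e4, e3, e5]
      field_simp
      ring
    rw [logKernel, harg _ rfl]
    rw [show (1 + c) / (1 + p) * r * p * c - (1 + c) / (1 + p) * r =
      (1 + c) / (1 + p) * r * (p * c - 1) by ring]
    generalize (1 + c) / (1 + p) = k at *
    generalize Real.log ((1 + r * x) * (1 + r * y) / ((1 + r) * (1 + r * (x * y)))) = L
    field_simp
  rw [lintegral_scale _ hk, setLIntegral_congr_fun measurableSet_Ioi h1,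
    lintegral_const_mul _ (by fun_prop)]
  have hK : ∫⁻ r in Ioi (0 : ℝ), ENNReal.ofReal
      (Real.log ((1 + r * x) * (1 + r * y) / ((1 + r) * (1 + r * (x * y)))) / r) =
      ENNReal.ofReal (Real.log x * (- Real.log y)) := by
    -- `x` and `y` lie on opposite sides of `1`, in an order depending on the sign of `p c - 1`;
    -- the claim is symmetric under exchanging them.
    rcases lt_or_gt_of_ne hpc with h | h
    · have hx1 : x < 1 := by rw [hx, div_lt_one (by positivity)]; nlinarith
      have hy1 : 1 < y := by rw [hy, one_lt_div (by positivity)]; nlinarith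
      rw [show Real.log x * (- Real.log y) = Real.log y * (- Real.log x) by ring,
        ← lintegral_log_cross hy1 (by positivity) hx1]
      refine lintegral_congr fun r => ?_
      rw [mul_comm (1 + r * y), mul_comm y]
    · have hx1 : 1 < x := by rw [hx, one_lt_div (by positivity)]; nlinarith
      have hy1 : y < 1 := by rw [hy, div_lt_one (by positivity)]; nlinarith
      exact lintegral_log_cross hx1 (by positivity) hy1
  rw [hK, ← ENNReal.ofReal_mul (by positivity), twoLogKernel, hlogy]
  congr 1
  ring

theorem lintegral_a_b {c : ℝ} (hc : 0 < c) :
    ∫⁻ b in Ioi (0 : ℝ), ∫⁻ a in Ioi (0 : ℝ), ENNReal.ofReal (logKernel a b c) =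
      ∫⁻ p in Ioi (0 : ℝ), ENNReal.ofReal (twoLogKernel c p) := by
  rw [setLIntegral_congr_fun measurableSet_Ioi
    (fun b hb => lintegral_scale (fun a => ENNReal.ofReal (logKernel a b c)) hb),
    lintegral_lintegral_swap]
  · exact setLIntegral_congr_fun measurableSet_Ioi fun p hp => lintegral_scale_logKernel hc hp
  · refine Measurable.aemeasurable ?_
    unfold Function.uncurry
    have : Measurable fun t : ℝ × ℝ => logKernel (t.1 * t.2) t.1 c :=
      measurable_logKernel.comp (f := fun t : ℝ × ℝ => (t.1 * t.2, t.1, c)) (by fun_prop)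
    fun_prop

/-! ### Reduction to the unit square -/

/-- Invariance of `twoLogKernel c p dc dp` under `(c, p) ↦ (1/c, 1/p)`. -/
theorem twoLogKernel_inv {c p : ℝ} (hc : 0 < c) (hp : 0 < p) :
    ENNReal.ofReal (1 / c ^ 2) * (ENNReal.ofReal (1 / p ^ 2) *
      ENNReal.ofReal (twoLogKernel (1 / c) (1 / p))) = ENNReal.ofReal (twoLogKernel c p) := by
  rw [← ENNReal.ofReal_mul (by positivity), ← ENNReal.ofReal_mul (by positivity)]
  congr 1
  unfold twoLogKernel
  have e1 : 1 / p * (1 + 1 / c) / (1 + 1 / p) = (c * (1 + p) / (1 + c))⁻¹ := by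
    field_simp; ring
  have e2 : 1 / c * (1 + 1 / p) / (1 + 1 / c) = (p * (1 + c) / (1 + p))⁻¹ := by
    field_simp; ring
  have e3 : (1 / p * (1 / c) - 1) ^ 2 = (p * c - 1) ^ 2 / (p * c) ^ 2 := by
    field_simp; ring
  rw [e1, e2, e3, Real.log_inv, Real.log_inv]
  by_cases h : p * c - 1 = 0
  · simp [h]
  field_simp

theorem lintegral_twoLogKernel_eq_two_mul :
    ∫⁻ c in Ioi (0 : ℝ), ∫⁻ p in Ioi (0 : ℝ), ENNReal.ofReal (twoLogKernel c p) =
      2 * ∫⁻ c in Ioi (0 : ℝ), ∫⁻ p in Ioo 0 (1 / c), ENNReal.ofReal (twoLogKernel c p) := by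
  -- The restrictions of the integrand to `p c < 1` and to `p c > 1`.
  set H1 : ℝ → ℝ → ENNReal := fun c p =>
    {t : ℝ × ℝ | t.2 * t.1 < 1}.indicator (fun t => ENNReal.ofReal (twoLogKernel t.1 t.2)) (c, p)
    with hH1
  set H2 : ℝ → ℝ → ENNReal := fun c p =>
    {t : ℝ × ℝ | 1 < t.2 * t.1}.indicator (fun t => ENNReal.ofReal (twoLogKernel t.1 t.2)) (c, p)
    with hH2
  have hm1 : Measurable fun t : ℝ × ℝ => H1 t.1 t.2 :=
    Measurable.indicator (by fun_prop) (measurableSet_lt (by fun_prop) (by fun_prop))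
  have hsplit : ∀ c p, ENNReal.ofReal (twoLogKernel c p) = H1 c p + H2 c p := by
    intro c p
    rcases lt_trichotomy (p * c) 1 with h | h | h
    · simp [hH1, hH2, h, h.le]
    · simp [hH1, hH2, h, twoLogKernel]
    · simp [hH1, hH2, h, h.le]
  have hinv : ∀ c ∈ Ioi (0 : ℝ), ∀ p ∈ Ioi (0 : ℝ), ENNReal.ofReal (1 / c ^ 2) *
      (ENNReal.ofReal (1 / p ^ 2) * H2 (1 / c) (1 / p)) = H1 c p := by
    intro c (hc : 0 < c) p (hp : 0 < p)
    have hiff : 1 < 1 / p * (1 / c) ↔ p * c < 1 := by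
      rw [show 1 / p * (1 / c) = 1 / (p * c) by field_simp, one_lt_div (by positivity)]
    by_cases h : p * c < 1
    · simp only [hH1, hH2, indicator, mem_ofPred_eq, hiff, h, if_true]
      exact twoLogKernel_inv hc hp
    · simp only [hH1, hH2, indicator, mem_ofPred_eq, hiff, h, if_false, mul_zero]
  have h2 : ∫⁻ c in Ioi (0 : ℝ), ∫⁻ p in Ioi (0 : ℝ), H2 c p =
      ∫⁻ c in Ioi (0 : ℝ), ∫⁻ p in Ioi (0 : ℝ), H1 c p := by
    rw [lintegral_inv]
    refine setLIntegral_congr_fun measurableSet_Ioi fun c hc => ?_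
    rw [lintegral_inv, ← lintegral_const_mul' _ _ ENNReal.ofReal_ne_top]
    exact setLIntegral_congr_fun measurableSet_Ioi fun p hp => hinv c hc p hp
  have h3 : ∀ c ∈ Ioi (0 : ℝ), ∫⁻ p in Ioi (0 : ℝ), H1 c p =
      ∫⁻ p in Ioo 0 (1 / c), ENNReal.ofReal (twoLogKernel c p) := by
    intro c (hc : 0 < c)
    have : ∀ p, H1 c p = (Iio (1 / c)).indicator (fun p => ENNReal.ofReal (twoLogKernel c p)) p := by
      intro p
      simp only [hH1, indicator, mem_ofPred_eq, mem_Iio, lt_div_iff₀ hc]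
    simp_rw [this]
    rw [setLIntegral_indicator measurableSet_Iio, inter_comm, Ioi_inter_Iio]
  have hm1' : ∀ c, Measurable fun p => H1 c p := fun c =>
    hm1.comp (f := fun p : ℝ => (c, p)) (by fun_prop)
  calc ∫⁻ c in Ioi (0 : ℝ), ∫⁻ p in Ioi (0 : ℝ), ENNReal.ofReal (twoLogKernel c p)
      = ∫⁻ c in Ioi (0 : ℝ), ∫⁻ p in Ioi (0 : ℝ), (H1 c p + H2 c p) := by simp_rw [hsplit]
    _ = (∫⁻ c in Ioi (0 : ℝ), ∫⁻ p in Ioi (0 : ℝ), H1 c p) +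
        ∫⁻ c in Ioi (0 : ℝ), ∫⁻ p in Ioi (0 : ℝ), H2 c p := by
      simp_rw [lintegral_add_left (hm1' _)]
      exact lintegral_add_left (Measurable.lintegral_prod_right' hm1) _
    _ = _ := by rw [h2, ← two_mul, setLIntegral_congr_fun measurableSet_Ioi h3]

/-- The substitutions are `p = x / (1 + c - x)` at fixed `c`, and then `c = z (1 - x) / (1 - z)` at
fixed `x`; they turn the arguments of the two logarithms into `x` and `z`. -/
theorem lintegral_twoLogKernel_eq_unit_square :
    ∫⁻ c in Ioi (0 : ℝ), ∫⁻ p in Ioo 0 (1 / c), ENNReal.ofReal (twoLogKernel c p) =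
      ∫⁻ x in Ioo (0 : ℝ) 1, ∫⁻ z in Ioo (0 : ℝ) 1,
        ENNReal.ofReal (Real.log x * Real.log z / ((1 - x * z) * (1 - x) * (1 - z))) := by
  have h1 : ∀ c ∈ Ioi (0 : ℝ), ∫⁻ p in Ioo 0 (1 / c), ENNReal.ofReal (twoLogKernel c p) =
      ∫⁻ x in Ioo (0 : ℝ) 1, ENNReal.ofReal
        (Real.log x * Real.log (c / (1 + c - x)) / ((1 + c) * (1 - x) ^ 2)) := by
    intro c (hc : 0 < c)
    rw [lintegral_subst (s := Ioo 0 1) (g := fun x => x / (1 + c - x))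
      (g' := fun x => (1 + c) / (1 + c - x) ^ 2) (h := fun p => p * (1 + c) / (1 + p)) _
      measurableSet_Ioo]
    · refine setLIntegral_congr_fun measurableSet_Ioo fun x hx => ?_
      have hx0 := hx.1
      have hx1 : 0 < 1 - x := sub_pos.2 hx.2
      have hd : 0 < 1 + c - x := by linarith
      rw [abs_of_pos (by positivity), ← ENNReal.ofReal_mul (by positivity), twoLogKernel]
      congr 1
      have e1 : x / (1 + c - x) * (1 + c) / (1 + x / (1 + c - x)) = x := by
        field_simp; ring
      have e2 : c * (1 + x / (1 + c - x)) / (1 + c) = c / (1 + c - x) := by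
        field_simp; ring
      have e3 : x / (1 + c - x) * c - 1 = - ((1 + c) * (1 - x) / (1 + c - x)) := by
        field_simp; ring
      rw [e1, e2, e3]
      field_simp
    · intro x hx
      have hd : 1 + c - x ≠ 0 := by have := hx.2; linarith
      refine ((hasDerivAt_id x).div ((hasDerivAt_id x).const_sub (1 + c)) hd).congr_deriv ?_
      simp only [id]
      ring
    · intro x hx
      have hx0 := hx.1
      have hx1 : 0 < 1 - x := sub_pos.2 hx.2
      have hd : 0 < 1 + c - x := by linarith
      refine ⟨by positivity, ?_⟩
      rw [div_lt_div_iff₀ hd hc]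
      nlinarith
    · intro p hp
      have hp0 := hp.1
      have hp1 : p * c < 1 := (lt_div_iff₀ hc).1 hp.2
      refine ⟨⟨by positivity, ?_⟩, ?_⟩
      · rw [div_lt_one (by positivity)]
        nlinarith
      · have : 1 + c - p * (1 + c) / (1 + p) = (1 + c) / (1 + p) := by field_simp; ring
        rw [this]
        field_simp
    · intro x hx
      have hd : 0 < 1 + c - x := by have := hx.2; linarith
      have : 1 + x / (1 + c - x) = (1 + c) / (1 + c - x) := by field_simp; ring
      rw [this]
      field_simp
  rw [setLIntegral_congr_fun measurableSet_Ioi h1, lintegral_lintegral_swap]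
  · refine setLIntegral_congr_fun measurableSet_Ioo fun x hx => ?_
    have hx0 := hx.1
    have hx1 : 0 < 1 - x := sub_pos.2 hx.2
    rw [lintegral_subst (s := Ioo 0 1) (g := fun z => z * (1 - x) / (1 - z))
      (g' := fun z => (1 - x) / (1 - z) ^ 2) (h := fun c => c / (1 + c - x)) _
      measurableSet_Ioo]
    · refine setLIntegral_congr_fun measurableSet_Ioo fun z hz => ?_
      have hz0 := hz.1
      have hz1 : 0 < 1 - z := sub_pos.2 hz.2
      have hxz : 0 < 1 - x * z := by nlinarith
      rw [abs_of_pos (by positivity), ← ENNReal.ofReal_mul (by positivity)]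
      congr 1
      have e1 : 1 + z * (1 - x) / (1 - z) - x = (1 - x) / (1 - z) := by field_simp; ring
      have e2 : z * (1 - x) / (1 - z) / ((1 - x) / (1 - z)) = z := by field_simp
      have e3 : 1 + z * (1 - x) / (1 - z) = (1 - x * z) / (1 - z) := by field_simp; ring
      rw [e1, e2, e3]
      field_simp
    · intro z hz
      have hd : 1 - z ≠ 0 := by have := hz.2; linarith
      refine (((hasDerivAt_id z).mul_const (1 - x)).div
        ((hasDerivAt_id z).const_sub 1) hd).congr_deriv ?_
      simp only [id]
      ring
    · intro z hz
      have hz0 := hz.1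
      have hz1 : 0 < 1 - z := sub_pos.2 hz.2
      show 0 < z * (1 - x) / (1 - z)
      positivity
    · intro c (hc : 0 < c)
      have hd : 0 < 1 + c - x := by linarith
      refine ⟨⟨by positivity, ?_⟩, ?_⟩
      · rw [div_lt_one hd]
        linarith
      · have : 1 - c / (1 + c - x) = (1 - x) / (1 + c - x) := by field_simp; ring
        rw [this]
        field_simp
    · intro z hz
      have hz1 : 0 < 1 - z := sub_pos.2 hz.2
      have : 1 + z * (1 - x) / (1 - z) - x = (1 - x) / (1 - z) := by field_simp; ring
      rw [this]
      field_simp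
  · refine Measurable.aemeasurable ?_
    unfold Function.uncurry
    fun_prop


/-! ### Expansion of the unit-square integral into a triple series -/

theorem lintegral_pow_mul_neg_log (n : ℕ) :
    ∫⁻ z in Ioo (0 : ℝ) 1, ENNReal.ofReal (z ^ n * (- Real.log z)) =
      ENNReal.ofReal (1 / ((n : ℝ) + 1) ^ 2) := by
  have hn : (n : ℝ) + 1 ≠ 0 := by positivity
  -- The primitive is written with `z * log z`, which is continuous at `0`.
  rw [lintegral_Ioo_deriv (g := fun z => z ^ (n + 1) / ((n : ℝ) + 1) ^ 2 -
    z ^ n * (z * Real.log z) / (n + 1)) zero_le_one]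
  · simp
  · have := Real.continuous_mul_log
    exact Continuous.continuousOn (by fun_prop)
  · intro z hz
    have hz0 : z ≠ 0 := hz.1.ne'
    have h1 : HasDerivAt (fun z : ℝ => z ^ (n + 1) / ((n : ℝ) + 1) ^ 2 -
        z ^ (n + 1) * Real.log z / (n + 1)) (z ^ n * (- Real.log z)) z := by
      refine (((hasDerivAt_pow (n + 1) z).div_const _).sub
        (((hasDerivAt_pow (n + 1) z).mul (Real.hasDerivAt_log hz0)).div_const _)).congr_deriv ?_
      push_cast
      simp only [pow_succ]
      field_simp
      ring
    convert h1 using 3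
    ring
  · intro z hz
    have := Real.log_neg hz.1 hz.2
    have := hz.1
    have : 0 < - Real.log z := by linarith
    positivity

theorem ofReal_inv_one_sub {x : ℝ} (h0 : 0 < x) (h1 : x < 1) :
    ENNReal.ofReal (1 / (1 - x)) = ∑' n : ℕ, ENNReal.ofReal (x ^ n) := by
  rw [← ENNReal.ofReal_tsum_of_nonneg (fun n => by positivity)
    (summable_geometric_of_lt_one h0.le h1), tsum_geometric_of_lt_one h0.le h1, one_div]

theorem lintegral_unit_square :
    ∫⁻ x in Ioo (0 : ℝ) 1, ∫⁻ z in Ioo (0 : ℝ) 1,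
        ENNReal.ofReal (Real.log x * Real.log z / ((1 - x * z) * (1 - x) * (1 - z))) =
      ∑' t : ℕ × ℕ × ℕ, ENNReal.ofReal (1 / (((t.1 + t.2.1 : ℕ) : ℝ) + 1) ^ 2) *
        ENNReal.ofReal (1 / (((t.1 + t.2.2 : ℕ) : ℝ) + 1) ^ 2) := by
  have hpt : ∀ x ∈ Ioo (0 : ℝ) 1, ∀ z ∈ Ioo (0 : ℝ) 1,
      ENNReal.ofReal (Real.log x * Real.log z / ((1 - x * z) * (1 - x) * (1 - z))) =
      ∑' t : ℕ × ℕ × ℕ, ENNReal.ofReal (x ^ (t.1 + t.2.1) * (- Real.log x)) *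
        ENNReal.ofReal (z ^ (t.1 + t.2.2) * (- Real.log z)) := by
    intro x hx z hz
    obtain ⟨hx0, hx1⟩ := hx
    obtain ⟨hz0, hz1⟩ := hz
    have hlx : 0 < - Real.log x := by have := Real.log_neg hx0 hx1; linarith
    have hlz : 0 < - Real.log z := by have := Real.log_neg hz0 hz1; linarith
    have hx1' : 0 < 1 - x := by linarith
    have hz1' : 0 < 1 - z := by linarith
    have hxz : x * z < 1 := by nlinarith
    have hxz' : 0 < 1 - x * z := by linarith
    rw [show Real.log x * Real.log z / ((1 - x * z) * (1 - x) * (1 - z)) =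
      ((- Real.log x) * (- Real.log z)) *
        ((1 / (1 - x * z)) * ((1 / (1 - x)) * (1 / (1 - z)))) by field_simp,
      ENNReal.ofReal_mul (by positivity), ENNReal.ofReal_mul (p := 1 / (1 - x * z)) (by positivity),
      ENNReal.ofReal_mul (p := 1 / (1 - x)) (by positivity),
      ofReal_inv_one_sub (by positivity) hxz, ofReal_inv_one_sub hx0 hx1,
      ofReal_inv_one_sub hz0 hz1, ENNReal.tsum_prod', ← ENNReal.tsum_mul_right,
      ← ENNReal.tsum_mul_left]
    refine tsum_congr fun i => ?_
    rw [ENNReal.tsum_prod', ← ENNReal.tsum_mul_right, ← ENNReal.tsum_mul_left,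
      ← ENNReal.tsum_mul_left]
    refine tsum_congr fun j => ?_
    rw [← ENNReal.tsum_mul_left, ← ENNReal.tsum_mul_left, ← ENNReal.tsum_mul_left]
    refine tsum_congr fun k => ?_
    simp only
    rw [← ENNReal.ofReal_mul (by positivity), ← ENNReal.ofReal_mul (by positivity),
      ← ENNReal.ofReal_mul (by positivity), ← ENNReal.ofReal_mul (by positivity)]
    congr 1
    ring
  have h1 : ∀ x ∈ Ioo (0 : ℝ) 1, ∫⁻ z in Ioo (0 : ℝ) 1,
        ENNReal.ofReal (Real.log x * Real.log z / ((1 - x * z) * (1 - x) * (1 - z))) =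
      ∑' t : ℕ × ℕ × ℕ, ENNReal.ofReal (x ^ (t.1 + t.2.1) * (- Real.log x)) *
        ENNReal.ofReal (1 / (((t.1 + t.2.2 : ℕ) : ℝ) + 1) ^ 2) := by
    intro x hx
    rw [setLIntegral_congr_fun measurableSet_Ioo (hpt x hx),
      lintegral_tsum (fun t => by fun_prop)]
    refine tsum_congr fun t => ?_
    rw [lintegral_const_mul _ (by fun_prop), lintegral_pow_mul_neg_log]
  rw [setLIntegral_congr_fun measurableSet_Ioo h1, lintegral_tsum (fun t => by fun_prop)]
  refine tsum_congr fun t => ?_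
  rw [lintegral_mul_const _ (by fun_prop), lintegral_pow_mul_neg_log]

/-! ### Evaluation of the triple series -/

theorem tsum_ite_le (i : ℕ) (u : ℕ → ENNReal) :
    ∑' n, (if i ≤ n then u n else 0) = ∑' j, u (i + j) := by
  rw [← (add_right_injective i).tsum_eq]
  · simp
  · intro n hn
    have : i ≤ n := by
      by_contra h
      simp [h] at hn
    exact ⟨n - i, by simp; omega⟩

theorem tsum_ite_lt (i : ℕ) (u : ℕ → ENNReal) :
    ∑' n, (if i < n then u n else 0) = ∑' j, u (i + j + 1) := by
  simpa [Nat.succ_le_iff, add_right_comm] using tsum_ite_le (i + 1) u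

/-- Splitting of a double series into its diagonal, upper and lower triangular parts. -/
theorem tsum_tsum_eq_diag_add (h : ℕ → ℕ → ENNReal) :
    ∑' j, ∑' k, h j k =
      ∑' j, h j j + ∑' j, ∑' l, h j (j + l + 1) + ∑' j, ∑' l, h (j + l + 1) j := by
  have h1 : ∀ j, ∑' k, h j k = h j j + ∑' l, h j (j + l + 1) +
      ∑' k, (if k < j then h j k else 0) := by
    intro j
    rw [← tsum_ite_lt j, ← tsum_ite_eq j (fun k => h j k), ← ENNReal.tsum_add, ← ENNReal.tsum_add]
    refine tsum_congr fun k => ?_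
    rcases lt_trichotomy j k with hk | hk | hk
    · simp [hk, hk.ne', hk.not_gt]
    · simp [hk]
    · simp [hk, hk.ne, hk.not_gt]
  simp_rw [h1, ENNReal.tsum_add]
  congr 1
  rw [ENNReal.tsum_comm]
  simp_rw [fun k => tsum_ite_lt k (fun j => h j k)]

theorem tsum_tsum_add (g : ℕ → ENNReal) :
    ∑' i, ∑' j, g (i + j) = ∑' n : ℕ, ENNReal.ofReal ((n : ℝ) + 1) * g n := by
  simp_rw [← tsum_ite_le]
  rw [ENNReal.tsum_comm]
  refine tsum_congr fun n => ?_
  rw [tsum_eq_sum (s := Finset.range (n + 1)) (fun i hi => by simp at hi; simp; omega),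
    Finset.sum_congr rfl (fun i hi => if_pos (by simp at hi; omega))]
  rw [Finset.sum_const, Finset.card_range, nsmul_eq_mul, ← ENNReal.ofReal_natCast]
  push_cast
  rfl

theorem tsum_telescope {a : ℝ} (ha : 0 < a) :
    ∑' l : ℕ, ENNReal.ofReal (1 / ((a + l) * (a + l + 1))) = ENNReal.ofReal (1 / a) := by
  have hs : HasSum (fun l : ℕ => 1 / ((a + l) * (a + l + 1))) (1 / a) := by
    rw [hasSum_iff_tendsto_nat_of_nonneg (fun l => by positivity)]
    have h1 : ∀ n : ℕ, ∑ l ∈ Finset.range n, 1 / ((a + l) * (a + l + 1)) = 1 / a - 1 / (a + n) := by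
      intro n
      induction n with
      | zero => simp
      | succ n ih =>
        rw [Finset.sum_range_succ, ih]
        push_cast
        have : a + n ≠ 0 := by positivity
        have : a + (n + 1) ≠ 0 := by positivity
        field_simp
        ring
    simp_rw [h1]
    have : Tendsto (fun n : ℕ => 1 / a - 1 / (a + n)) atTop (𝓝 (1 / a - 0)) := by
      refine Tendsto.const_sub _ ?_
      simp_rw [one_div]
      exact tendsto_inv_atTop_zero.comp
        (tendsto_atTop_add_const_left _ _ tendsto_natCast_atTop_atTop)
    simpa using this
  rw [← ENNReal.ofReal_tsum_of_nonneg (fun n => by positivity) hs.summable, hs.tsum_eq]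

/-- `ζ(3) = ∑_{n ≥ 1} 1 / n³` as an extended nonnegative real, with `n` shifted to start at `0`. -/
noncomputable def Z3 : ENNReal := ∑' n : ℕ, ENNReal.ofReal (1 / ((n : ℝ) + 1) ^ 3)

/-- The double zeta value `ζ(2,1) = ∑_{n > m ≥ 1} 1 / (n² m)`, with `m = i + 1` and
`n = i + l + 2`. -/
noncomputable def Z21 : ENNReal :=
  ∑' i : ℕ, ∑' l : ℕ, ENNReal.ofReal (1 / (((i : ℝ) + 1) * ((i : ℝ) + l + 2) ^ 2))

/-- Finiteness comes from comparing `∑_{n > m} 1 / n²` with the telescoping series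
`∑_{n > m} 1 / (n (n - 1)) = 1 / m`. -/
theorem Z21_ne_top : Z21 ≠ ⊤ := by
  have h1 : Z21 ≤ ∑' i : ℕ, ENNReal.ofReal (1 / ((i : ℝ) + 1) ^ 2) := by
    refine ENNReal.tsum_le_tsum fun i => ?_
    have hi : (0 : ℝ) < (i : ℝ) + 1 := by positivity
    calc ∑' l : ℕ, ENNReal.ofReal (1 / (((i : ℝ) + 1) * ((i : ℝ) + l + 2) ^ 2))
        ≤ ∑' l : ℕ, ENNReal.ofReal (1 / ((i : ℝ) + 1)) *
          ENNReal.ofReal (1 / (((i : ℝ) + 1 + l) * ((i : ℝ) + 1 + l + 1))) := by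
          refine ENNReal.tsum_le_tsum fun l => ?_
          rw [← ENNReal.ofReal_mul (by positivity), one_div_mul_one_div]
          refine ENNReal.ofReal_le_ofReal (one_div_le_one_div_of_le (by positivity) ?_)
          refine mul_le_mul_of_nonneg_left ?_ hi.le
          nlinarith [(Nat.cast_nonneg l : (0 : ℝ) ≤ l)]
      _ = ENNReal.ofReal (1 / ((i : ℝ) + 1) ^ 2) := by
          rw [ENNReal.tsum_mul_left, tsum_telescope hi, ← ENNReal.ofReal_mul (by positivity)]
          congr 1
          field_simp
  refine ne_top_of_le_ne_top ?_ h1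
  have hs : Summable fun i : ℕ => 1 / ((i : ℝ) + 1) ^ 2 := by
    simpa using (summable_nat_add_iff 1).2 (Real.summable_one_div_nat_pow.2 one_lt_two)
  rw [← ENNReal.ofReal_tsum_of_nonneg (fun n => by positivity) hs]
  exact ENNReal.ofReal_ne_top

/-- Euler's identity `ζ(2,1) = ζ(3)`. The series `P = ∑_{m, k ≥ 1} 1 / (m k (m + k))` is evaluated
twice: `1 / (m k) = (1/m + 1/k) / (m + k)` gives `P = 2 ζ(2,1)`, while summing over `k` first gives
`P = ∑_m (1 + 1/2 + ⋯ + 1/m) / m² = ζ(3) + ζ(2,1)`. Cancelling uses `ζ(2,1) < ∞`. -/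
theorem Z21_eq_Z3 : Z21 = Z3 := by
  set P : ENNReal := ∑' m : ℕ, ∑' k : ℕ,
    ENNReal.ofReal (1 / (((m : ℝ) + 1) * (k + 1) * (m + k + 2))) with hP
  have h1 : P = Z21 + Z21 := by
    have : ∀ m k : ℕ, ENNReal.ofReal (1 / (((m : ℝ) + 1) * (k + 1) * (m + k + 2))) =
        ENNReal.ofReal (1 / (((m : ℝ) + 1) * ((m : ℝ) + k + 2) ^ 2)) +
        ENNReal.ofReal (1 / (((k : ℝ) + 1) * ((k : ℝ) + m + 2) ^ 2)) := by
      intro m k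
      rw [← ENNReal.ofReal_add (by positivity) (by positivity)]
      congr 1
      rw [add_comm (k : ℝ) m]
      field_simp
      ring
    simp_rw [hP, this, ENNReal.tsum_add]
    congr 1
    exact ENNReal.tsum_comm
  have h2 : P = Z3 + Z21 := by
    -- `1 / (k (m + k))` is a telescoping sum of `m` terms, up to the factor `1 / m`; each of these
    -- is then summed over `k` to one term of the harmonic number.
    have h3 : ∀ m k : ℕ, ENNReal.ofReal (1 / (((m : ℝ) + 1) * (k + 1) * (m + k + 2))) =
        ∑ j ∈ Finset.range (m + 1), ENNReal.ofReal (1 / ((m : ℝ) + 1) ^ 2) *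
          ENNReal.ofReal (1 / (((j : ℝ) + 1 + k) * (j + 1 + k + 1))) := by
      intro m k
      have h4 : ∀ n : ℕ, ∑ j ∈ Finset.range n, 1 / (((j : ℝ) + 1 + k) * (j + 1 + k + 1)) =
          1 / ((k : ℝ) + 1) - 1 / (n + k + 1) := by
        intro n
        induction n with
        | zero => simp
        | succ n ih =>
          rw [Finset.sum_range_succ, ih]
          push_cast
          field_simp
          ring
      rw [← Finset.mul_sum, ← ENNReal.ofReal_sum_of_nonneg (fun j _ => by positivity), h4,
        ← ENNReal.ofReal_mul (by positivity)]
      congr 1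
      push_cast
      field_simp
      ring
    have h5 : ∀ m : ℕ, ∑' k : ℕ, ENNReal.ofReal (1 / (((m : ℝ) + 1) * (k + 1) * (m + k + 2))) =
        ∑' j : ℕ, if j ≤ m then
          ENNReal.ofReal (1 / (((j : ℝ) + 1) * ((m : ℝ) + 1) ^ 2)) else 0 := by
      intro m
      simp_rw [h3]
      rw [Summable.tsum_finsetSum (fun _ _ => ENNReal.summable),
        tsum_eq_sum (s := Finset.range (m + 1)) (fun i hi => by simp at hi; simp; omega)]
      refine Finset.sum_congr rfl fun j hj => ?_
      rw [if_pos (by simp at hj; omega), ENNReal.tsum_mul_left, tsum_telescope (by positivity),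
        ← ENNReal.ofReal_mul (by positivity)]
      congr 1
      field_simp
    simp_rw [hP, h5]
    rw [ENNReal.tsum_comm, Z3, Z21, ← ENNReal.tsum_add]
    refine tsum_congr fun j => ?_
    rw [tsum_ite_le j (fun m => ENNReal.ofReal (1 / (((j : ℝ) + 1) * ((m : ℝ) + 1) ^ 2))),
      tsum_eq_zero_add' ENNReal.summable]
    congr 1
    · congr 1
      push_cast
      field_simp
      ring
    · refine tsum_congr fun l => ?_
      congr 3
      push_cast
      ring
  exact (ENNReal.add_left_inj Z21_ne_top).1 (h1.symm.trans h2)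

theorem tsum_triple :
    ∑' t : ℕ × ℕ × ℕ, ENNReal.ofReal (1 / (((t.1 + t.2.1 : ℕ) : ℝ) + 1) ^ 2) *
        ENNReal.ofReal (1 / (((t.1 + t.2.2 : ℕ) : ℝ) + 1) ^ 2) = 3 * Z3 := by
  set q : ℕ → ENNReal := fun n => ENNReal.ofReal (1 / ((n : ℝ) + 1) ^ 2) with hq
  have h1 : ∀ i, ∑' s : ℕ × ℕ, q (i + s.1) * q (i + s.2) =
      ∑' j, (q (i + j) * q (i + j)) + ∑' j, ∑' l, q (i + j) * q (i + j + l + 1) +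
      ∑' j, ∑' l, q (i + j) * q (i + j + l + 1) := by
    intro i
    rw [ENNReal.tsum_prod', tsum_tsum_eq_diag_add]
    simp only [← add_assoc]
    congr 1
    simp_rw [mul_comm]
  have h2 : ∑' i, ∑' j, (q (i + j) * q (i + j)) = Z3 := by
    rw [tsum_tsum_add (fun n => q n * q n)]
    refine tsum_congr fun n => ?_
    rw [← ENNReal.ofReal_mul (by positivity), ← ENNReal.ofReal_mul (by positivity)]
    congr 1
    field_simp
  have h3 : ∑' i, ∑' j, ∑' l, q (i + j) * q (i + j + l + 1) = Z21 := by
    rw [tsum_tsum_add (fun n => ∑' l, q n * q (n + l + 1))]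
    refine tsum_congr fun n => ?_
    rw [← ENNReal.tsum_mul_left]
    refine tsum_congr fun l => ?_
    rw [← ENNReal.ofReal_mul (by positivity), ← ENNReal.ofReal_mul (by positivity)]
    congr 1
    push_cast
    field_simp
    ring
  calc _ = ∑' i, ∑' s : ℕ × ℕ, q (i + s.1) * q (i + s.2) := ENNReal.tsum_prod'
    _ = 3 * Z3 := by
      simp_rw [h1, ENNReal.tsum_add, h2, h3, Z21_eq_Z3]
      ring

/-! ### Assembly -/

/-- Tonelli over `(0,∞)⁵`, in the order in which the variables are integrated out. -/
theorem lintegral_fin_five {f : ℝ → ℝ → ℝ → ℝ → ℝ → ENNReal}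
    (hf : Measurable fun x : Fin 5 → ℝ => f (x 0) (x 1) (x 2) (x 3) (x 4)) :
    ∫⁻ x in Set.univ.pi fun _ : Fin 5 => Ioi (0 : ℝ), f (x 0) (x 1) (x 2) (x 3) (x 4) =
      ∫⁻ x4 in Ioi (0 : ℝ), ∫⁻ x2 in Ioi (0 : ℝ), ∫⁻ x1 in Ioi (0 : ℝ), ∫⁻ x3 in Ioi (0 : ℝ),
        ∫⁻ x0 in Ioi (0 : ℝ), f x0 x1 x2 x3 x4 := by
  rw [volume_pi, Measure.restrict_pi_pi, lintegral_eq_lmarginal_univ 0,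
    show (Finset.univ : Finset (Fin 5)) = {4, 2, 1, 3, 0} by decide,
    lmarginal_insert _ hf (by decide)]
  simp_rw [lmarginal_insert _ hf (show (2 : Fin 5) ∉ ({1, 3, 0} : Finset (Fin 5)) by decide),
    lmarginal_insert _ hf (show (1 : Fin 5) ∉ ({3, 0} : Finset (Fin 5)) by decide),
    lmarginal_insert _ hf (show (3 : Fin 5) ∉ ({0} : Finset (Fin 5)) by decide),
    lmarginal_singleton]
  simp [Function.update]

theorem lintegral_inv_PsiW3_sq :
    ∫⁻ x in Set.univ.pi fun _ : Fin 5 => Ioi (0 : ℝ),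
      ENNReal.ofReal (1 / PsiW3 (x 0) (x 1) (x 2) (x 3) (x 4) 1 ^ 2) = 6 * Z3 := by
  rw [lintegral_fin_five
    (f := fun x0 x1 x2 x3 x4 => ENNReal.ofReal (1 / PsiW3 x0 x1 x2 x3 x4 1 ^ 2))
    (by unfold PsiW3; fun_prop)]
  have h1 : ∀ c ∈ Ioi (0 : ℝ), ∫⁻ b in Ioi (0 : ℝ), ∫⁻ a in Ioi (0 : ℝ),
      ∫⁻ x4 in Ioi (0 : ℝ), ∫⁻ x1 in Ioi (0 : ℝ), ENNReal.ofReal (1 / PsiW3 x1 a b x4 c 1 ^ 2) =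
      ∫⁻ p in Ioi (0 : ℝ), ENNReal.ofReal (twoLogKernel c p) := by
    intro c (hc : 0 < c)
    rw [← lintegral_a_b hc]
    refine setLIntegral_congr_fun measurableSet_Ioi fun b hb => ?_
    -- `lintegral_x1_x4` fails only at the single point `a = b / c`.
    refine setLIntegral_congr_fun_ae measurableSet_Ioi ?_
    filter_upwards [(Set.countable_singleton (b / c)).ae_notMem volume] with a ha ha0
    refine lintegral_x1_x4 ha0 hb hc fun h => ha ?_
    rw [Set.mem_singleton_iff, ← h]
    field_simp
  rw [setLIntegral_congr_fun measurableSet_Ioi h1, lintegral_twoLogKernel_eq_two_mul,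
    lintegral_twoLogKernel_eq_unit_square, lintegral_unit_square, tsum_triple, ← mul_assoc]
  norm_num

theorem Z3_eq_ofReal : Z3 = ENNReal.ofReal (∑' n : ℕ, 1 / ((n : ℝ) + 1) ^ 3) := by
  have hs : Summable fun i : ℕ => 1 / ((i : ℝ) + 1) ^ 3 := by
    simpa using (summable_nat_add_iff 1).2
      (Real.summable_one_div_nat_pow.2 (show 1 < 3 by norm_num))
  rw [Z3, ENNReal.ofReal_tsum_of_nonneg (fun n => by positivity) hs]

end

/-- The canonical integral `I_{W₃}(ω⁵) = ∫_{(0,∞)⁵} 10/Ψ(x,1)² dx = 60·ζ(3)`. -/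
theorem canonical_integral_W3 :
    IntegrableOn (fun x : Fin 5 → ℝ => 10 / (PsiW3 (x 0) (x 1) (x 2) (x 3) (x 4) 1) ^ 2)
      (Set.univ.pi fun _ : Fin 5 => Set.Ioi (0 : ℝ)) volume ∧
    ∫ x in Set.univ.pi fun _ : Fin 5 => Set.Ioi (0 : ℝ),
        10 / (PsiW3 (x 0) (x 1) (x 2) (x 3) (x 4) 1) ^ 2 =
      60 * ∑' n : ℕ, 1 / ((n : ℝ) + 1) ^ 3 := by
  have hm : Measurable fun x : Fin 5 → ℝ =>
      10 / (PsiW3 (x 0) (x 1) (x 2) (x 3) (x 4) 1) ^ 2 := by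
    unfold PsiW3
    fun_prop
  have hz : 0 ≤ ∑' n : ℕ, 1 / ((n : ℝ) + 1) ^ 3 := tsum_nonneg fun n => by positivity
  have h0 : ∀ x : Fin 5 → ℝ, 0 ≤ 10 / (PsiW3 (x 0) (x 1) (x 2) (x 3) (x 4) 1) ^ 2 :=
    fun x => by positivity
  have hI : ∫⁻ x in Set.univ.pi fun _ : Fin 5 => Set.Ioi (0 : ℝ),
      ENNReal.ofReal (10 / (PsiW3 (x 0) (x 1) (x 2) (x 3) (x 4) 1) ^ 2) =
      ENNReal.ofReal (60 * ∑' n : ℕ, 1 / ((n : ℝ) + 1) ^ 3) := by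
    have h1 : ∀ t : ℝ, ENNReal.ofReal (10 / t) = ENNReal.ofReal 10 * ENNReal.ofReal (1 / t) := by
      intro t
      rw [← ENNReal.ofReal_mul (by norm_num), mul_one_div]
    simp_rw [h1]
    rw [lintegral_const_mul' _ _ ENNReal.ofReal_ne_top, lintegral_inv_PsiW3_sq, Z3_eq_ofReal,
      show (60 : ℝ) = 10 * 6 by norm_num, mul_assoc, ENNReal.ofReal_mul (by norm_num),
      ENNReal.ofReal_mul (by norm_num)]
    norm_num
  constructor
  · exact (lintegral_ofReal_ne_top_iff_integrable hm.aestronglyMeasurable (ae_of_all _ h0)).1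
      (hI ▸ ENNReal.ofReal_ne_top)
  · rw [integral_eq_lintegral_of_nonneg_ae (ae_of_all _ h0) hm.aestronglyMeasurable, hI,
      ENNReal.toReal_ofReal (by positivity)]
end

section
/- Cauchy–Binet form of the Matrix-Tree theorem: let R be a commutative ring, H an E×B matrix over R with E, B finite and |B| ≤ |E|, and let x_e (e ∈ E) be independent variables. Then in the polynomial ring R[x_e : e ∈ E], det(Hᵀ·diag(x_e)·H) = Σ_{S ⊆ E, |S| = |B|} det(H_S)² · ∏_{e∈S} x_e, where H_S denotes the |B|×|B| submatrix of H formed by the rows indexed by S. In particular, every coefficient of det(Hᵀ·diag(x_e)·H) is a square in R, and for H a matrix over ℚ with linearly independent columns this determinant is a nonzero polynomial. -/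
/-!
Expanding `det (A * C)` by multilinearity in the rows gives
`∑ f : B → E, (∏ b, A b (f b)) * det (C.submatrix f id)`. Grouping the `f` by their image `S`, only
the injective ones survive, so `#S = #B`; after fixing a bijection `σ : B ≃ S` these are the maps
`σ ∘ π` with `π` a permutation of `B`. Then `det (C.submatrix (σ ∘ π) id) = sign π * det C_S`, and
the remaining signed sum of products is the minor `det A_S`: this is the Cauchy–Binet formula
`det_mul_eq_sum_minors`. It is applied to `A = Hᵀ * diagonal x` and `C = H`.

Distinct `S` contribute distinct monomials, so the coefficient at `m` comes only from `S = m.support`.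
For nonvanishing over `ℚ`, specializing all variables to `1` yields `det (Hᵀ * H)`, which is nonzero
because `Hᵀ * H` has the same kernel as `H`.
-/

open Matrix MvPolynomial

/-- Row expansion of the determinant of a product of rectangular matrices. -/
lemma det_mul_eq_sum_functions {E B P : Type*} [Fintype E] [Fintype B] [DecidableEq E]
    [DecidableEq B] [CommRing P] (A : Matrix B E P) (C : Matrix E B P) :
    (A * C).det = ∑ f : B → E, (∏ b, A b (f b)) * (C.submatrix f id).det := by
  have h : A * C = fun b => ∑ e, A b e • C e := by
    ext b b'
    simp [Matrix.mul_apply, Finset.sum_apply]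
  rw [h]
  change Matrix.detRowAlternating.toMultilinearMap (fun b => ∑ e, A b e • C e) = _
  rw [MultilinearMap.map_sum]
  refine Finset.sum_congr rfl fun f _ => ?_
  rw [MultilinearMap.map_smul_univ]
  rfl

/-- For `σ : B ≃ S`, the maps `B → E` with image `S` are exactly the `σ ∘ π`, `π` a permutation. -/
lemma sum_functions_image_eq {E B P : Type*} [Fintype E] [Fintype B] [DecidableEq E]
    [DecidableEq B] [AddCommMonoid P] (S : Finset E) (σ : B ≃ {e : E // e ∈ S})
    (g : (B → E) → P) :
    ∑ f : B → E with Finset.univ.image f = S, g f =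
      ∑ π : Equiv.Perm B, g (fun b => (σ (π b) : E)) := by
  symm
  refine Finset.sum_bij (fun π _ b => (σ (π b) : E)) ?_ ?_ ?_ ?_
  · intro π _
    simp only [Finset.mem_filter, Finset.mem_univ, true_and]
    ext e
    simp only [Finset.mem_image, Finset.mem_univ, true_and]
    constructor
    · rintro ⟨b, rfl⟩
      exact (σ (π b)).2
    · intro he
      exact ⟨π.symm (σ.symm ⟨e, he⟩), by simp⟩
  · intro π _ π' _ h
    ext b
    exact σ.injective (Subtype.ext (congrFun h b))
  · intro f hf
    have hf' : Finset.univ.image f = S := by simpa using hf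
    have hm : ∀ b, f b ∈ S := fun b => hf' ▸ Finset.mem_image_of_mem f (Finset.mem_univ b)
    have hs : Function.Surjective fun b => σ.symm ⟨f b, hm b⟩ := by
      intro b
      have hb : ((σ b : E)) ∈ Finset.univ.image f := hf' ▸ (σ b).2
      obtain ⟨a, -, ha⟩ := Finset.mem_image.1 hb
      exact ⟨a, by simp [ha]⟩
    refine ⟨Equiv.ofBijective _ (Finite.surjective_iff_bijective.1 hs), Finset.mem_univ _, ?_⟩
    ext b
    simp
  · intro π _
    rfl

/-- The Cauchy–Binet formula; the value of each summand does not depend on the enumeration `σ S`,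
which is the same for both minors. -/
lemma det_mul_eq_sum_minors {E B P : Type*} [Fintype E] [Fintype B] [DecidableEq E]
    [DecidableEq B] [CommRing P] (A : Matrix B E P) (C : Matrix E B P)
    (σ : (S : Finset E) → S.card = Fintype.card B → (B ≃ {e : E // e ∈ S})) :
    (A * C).det = ∑ S : Finset E, if h : S.card = Fintype.card B then
      (A.submatrix id (fun b => (σ S h b : E))).det *
        (C.submatrix (fun b => (σ S h b : E)) id).det else 0 := by
  rw [det_mul_eq_sum_functions,
    ← Finset.sum_fiberwise Finset.univ (fun f : B → E => Finset.univ.image f)]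
  refine Finset.sum_congr rfl fun S _ => ?_
  split_ifs with h
  · rw [sum_functions_image_eq S (σ S h), ← Matrix.det_transpose (A.submatrix _ _),
      Matrix.det_apply', Finset.sum_mul]
    refine Finset.sum_congr rfl fun π _ => ?_
    have hp := Matrix.det_permute π (C.submatrix (fun b => (σ S h b : E)) id)
    rw [Matrix.submatrix_submatrix] at hp
    change (∏ b, A b (σ S h (π b))) *
      (C.submatrix ((fun b => (σ S h b : E)) ∘ π) (id ∘ id)).det = _
    rw [hp]
    simp only [Matrix.transpose_apply, Matrix.submatrix_apply, id]
    ring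
  · refine Finset.sum_eq_zero fun f hf => ?_
    have hf' : Finset.univ.image f = S := by simpa using hf
    have hni : ¬ Function.Injective f := fun hi =>
      h (by rw [← hf', Finset.card_image_of_injective _ hi, Finset.card_univ])
    obtain ⟨i, j, hij, hne⟩ : ∃ i j, f i = f j ∧ i ≠ j := by
      simpa [Function.Injective] using hni
    rw [Matrix.det_zero_of_row_eq hne (by ext b; simp [hij]), mul_zero]

lemma det_transpose_mul_diagonal_mul {E B R : Type*} [Fintype E] [Fintype B] [DecidableEq E]
    [DecidableEq B] [CommRing R] (H : Matrix E B R)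
    (σ : (S : Finset E) → S.card = Fintype.card B → (B ≃ {e : E // e ∈ S})) :
    ((H.map (fun r => (MvPolynomial.C r : MvPolynomial E R)))ᵀ *
        Matrix.diagonal (fun e : E => (MvPolynomial.X e : MvPolynomial E R)) *
        H.map (fun r => (MvPolynomial.C r : MvPolynomial E R))).det =
      ∑ S : Finset E,
        if h : S.card = Fintype.card B then
          MvPolynomial.C ((H.submatrix (fun b : B => ((σ S h b : E))) id).det ^ 2) *
            ∏ e ∈ S, MvPolynomial.X e
        else 0 := by
  rw [det_mul_eq_sum_minors _ _ σ]
  refine Finset.sum_congr rfl fun S _ => ?_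
  split_ifs with h
  · set N := H.submatrix (fun b : B => ((σ S h b : E))) id with hN
    have hC : ((H.map (fun r => (MvPolynomial.C r : MvPolynomial E R))).submatrix
        (fun b => (σ S h b : E)) id).det = MvPolynomial.C N.det := by
      rw [RingHom.map_det]
      rfl
    have hA : (((H.map (fun r => (MvPolynomial.C r : MvPolynomial E R)))ᵀ *
        Matrix.diagonal (fun e : E => (MvPolynomial.X e : MvPolynomial E R))).submatrix id
          (fun b => (σ S h b : E))) =
        ((H.map (fun r => (MvPolynomial.C r : MvPolynomial E R))).submatrix
          (fun b => (σ S h b : E)) id)ᵀ *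
          Matrix.diagonal (fun b : B => (MvPolynomial.X (σ S h b : E) : MvPolynomial E R)) := by
      ext1 b b'
      simp [Matrix.mul_diagonal]
    have hX : ∏ b, (MvPolynomial.X (σ S h b : E) : MvPolynomial E R) =
        ∏ e ∈ S, MvPolynomial.X e := by
      rw [Equiv.prod_comp (σ S h) (fun e => (MvPolynomial.X (e : E) : MvPolynomial E R)),
        Finset.prod_coe_sort S (fun e => (MvPolynomial.X e : MvPolynomial E R))]
    rw [hA, Matrix.det_mul, Matrix.det_transpose, Matrix.det_diagonal, hC, hX, map_pow]
    ring
  · rfl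

/-- The monomial `∏ e ∈ S, X e` has coefficient `0` or `1` everywhere, and is nonzero only at an
exponent with support `S`. -/
lemma coeff_prod_X {E R : Type*} [DecidableEq E] [CommRing R] (S : Finset E) (m : E →₀ ℕ) :
    (∏ e ∈ S, (MvPolynomial.X e : MvPolynomial E R)).coeff m =
      if S = m.support ∧ ∀ e ∈ S, m e = 1 then 1 else 0 := by
  have hmon : ∏ e ∈ S, (MvPolynomial.X e : MvPolynomial E R) =
      MvPolynomial.monomial (∑ e ∈ S, Finsupp.single e 1) 1 := by
    simp [MvPolynomial.monomial_sum_one, MvPolynomial.X]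
  have happ : ∀ e, (∑ e ∈ S, Finsupp.single e 1 : E →₀ ℕ) e = if e ∈ S then 1 else 0 := by
    intro e
    simp [Finsupp.finsetSum_apply, Finsupp.single_apply]
  rw [hmon, MvPolynomial.coeff_monomial]
  refine if_congr ?_ rfl rfl
  constructor
  · rintro rfl
    refine ⟨?_, fun e he => by rw [happ, if_pos he]⟩
    ext e
    rw [Finsupp.mem_support_iff, happ]
    simp
  · rintro ⟨h, h1⟩
    ext e
    rw [happ]
    split_ifs with he
    · exact (h1 e he).symm
    · rw [h, Finsupp.mem_support_iff, not_not] at he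
      exact he.symm

/-- Cauchy–Binet form of the Matrix-Tree theorem:
`det(Hᵀ·diag(x)·H) = Σ_{S ⊆ E, |S| = |B|} det(H_S)² · ∏_{e ∈ S} x_e`,
in particular every coefficient of this determinant is a square in `R`, and for a
rational matrix `H'` with linearly independent columns the determinant is nonzero. -/
theorem cauchy_binet_matrix_tree
    {E B : Type*} [Fintype E] [Fintype B] [DecidableEq E] [DecidableEq B]
    {R : Type*} [CommRing R]
    (H : Matrix E B R)
    (hcard : Fintype.card B ≤ Fintype.card E) :
    (∀ σ : (S : Finset E) → S.card = Fintype.card B → (B ≃ {e : E // e ∈ S}),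
      ((H.map (fun r => (MvPolynomial.C r : MvPolynomial E R)))ᵀ *
          Matrix.diagonal (fun e : E => (MvPolynomial.X e : MvPolynomial E R)) *
          H.map (fun r => (MvPolynomial.C r : MvPolynomial E R))).det =
        ∑ S : Finset E,
          if h : S.card = Fintype.card B then
            MvPolynomial.C ((H.submatrix (fun b : B => ((σ S h b : E))) id).det ^ 2) *
              ∏ e ∈ S, MvPolynomial.X e
          else 0) ∧
    (∀ m : E →₀ ℕ, ∃ r : R,
      ((H.map (fun r => (MvPolynomial.C r : MvPolynomial E R)))ᵀ *
          Matrix.diagonal (fun e : E => (MvPolynomial.X e : MvPolynomial E R)) *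
          H.map (fun r => (MvPolynomial.C r : MvPolynomial E R))).det.coeff m = r ^ 2) ∧
    (∀ H' : Matrix E B ℚ, LinearIndependent ℚ (fun b : B => fun e : E => H' e b) →
      ((H'.map (fun q => (MvPolynomial.C q : MvPolynomial E ℚ)))ᵀ *
          Matrix.diagonal (fun e : E => (MvPolynomial.X e : MvPolynomial E ℚ)) *
          H'.map (fun q => (MvPolynomial.C q : MvPolynomial E ℚ))).det ≠ 0) := by
  refine ⟨det_transpose_mul_diagonal_mul H, fun m => ?_, fun H' hH' h0 => ?_⟩
  · have σ : (S : Finset E) → S.card = Fintype.card B → (B ≃ {e : E // e ∈ S}) :=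
      fun S h => Fintype.equivOfCardEq (by simp [h])
    rw [det_transpose_mul_diagonal_mul H σ, MvPolynomial.coeff_sum,
      Finset.sum_eq_single m.support]
    · split_ifs with h
      · rw [MvPolynomial.coeff_C_mul, coeff_prod_X]
        split_ifs
        · exact ⟨_, mul_one _⟩
        · exact ⟨0, by simp⟩
      · exact ⟨0, by simp⟩
    · intro S _ hS
      split_ifs with h
      · rw [MvPolynomial.coeff_C_mul, coeff_prod_X, if_neg fun h' => hS h'.1, mul_zero]
      · exact MvPolynomial.coeff_zero m
    · exact fun h => absurd (Finset.mem_univ _) h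
  · have h1 : (H'ᵀ * H').det = 0 := by
      have h2 := congrArg (MvPolynomial.eval (fun _ : E => (1 : ℚ))) h0
      rw [RingHom.map_det, map_zero] at h2
      rw [← h2]
      congr 1
      ext b b'
      rw [RingHom.mapMatrix_apply, Matrix.map_apply, Matrix.mul_apply, Matrix.mul_apply]
      simp [Matrix.mul_diagonal]
    obtain ⟨v, hv, hv0⟩ := Matrix.exists_mulVec_eq_zero_iff.2 h1
    -- `v ⬝ᵥ (H'ᵀ * H') *ᵥ v` is the sum of squares of the entries of `H' *ᵥ v`.
    have h3 : H' *ᵥ v = 0 := by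
      rw [← dotProduct_self_eq_zero, Matrix.dotProduct_mulVec, Matrix.vecMul_mulVec,
        ← Matrix.dotProduct_mulVec, hv0, dotProduct_zero]
    have hinj : Function.Injective H'.mulVec := Matrix.mulVec_injective_iff.2 hH'
    exact hv (hinj (by rw [h3, Matrix.mulVec_zero]))
end
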